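/- arXiv:1910.02781 — 2 statements merged into one kernel-verified Lean document; each statement's English description precedes it below -/
import Mathlib

section
/- For every integer k ≥ 1 there is a polynomial P_k of degree k, namely P_k(X) = Σ_{0≤j≤k} λ_{j,k} X^j with λ_{j,k} = Σ_{0≤m≤k−j} (k! / (m! j! (k−m−j)!)) (c_1 − γ)^{k−m−j} (1/Γ)^{(m)}(1), such that S_k(x) = P_k(log log x) + O((log log x)^{k−1} / log x) uniformly for x ≥ 3. -/
/-!
`mertensS k x` is the summatory function at `x` of the `k`-th Dirichlet power of the arithmetic
function `recipPrime`, which is `1 / p` on primes (`mertensS_eq_summ`).  The asymptotic is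
established by induction on `k` up to an unknown additive constant, and an Abelian argument then
shows that this constant vanishes.

*Induction.*  Pointwise multiplication by `log` is a derivation for Dirichlet convolution.  Together
with Mertens' first theorem (`mertens_first`) this expresses, up to an error term, the
`log`-weighted summatory function of `recipPrime ^ (k + 1)` through the summatory function and the
`log`-weighted one of `recipPrime ^ k` (`summ_logMul_pow_succ`).  Partial summation
(`exists_const_of_logMul`) removes the weight `log`: for a family of polynomials with
`P_{k+1}' = (k + 1) P_k`, the summatory function of `recipPrime ^ k` is
`P_k (log log x) + d_k + O((log log x + 2) ^ (k - 1) / log x)` for a constant `d_k`, and the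
induction proceeds once `d_k = 0` (`summ_pow_asymp`).

*The constant.*  Let `V` be a standard exponential variable and `s → 0+`.  The mean of the summatory
function at `e ^ (V / s)` is the Dirichlet series `(∑ₚ p ^ (-1 - s)) ^ k`
(`tsum_rpow_eq_integral_summ`).  The simple pole of `ζ` at `1` gives
`∑ₚ p ^ (-1 - s) = log (1 / s) + c₁ - γ + O(s)` (`prime_zeta_asymp`).  On the other hand, the moments
of `log V` are the derivatives of `Γ` at `1`, and `P_k` is built from the Taylor coefficients of
`1 / Γ` at `1`, so the mean of `P_k (log (V / s))` is exactly `(log (1 / s) + c₁ - γ) ^ k`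
(`integral_eval_mertensPoly`).  The difference of the two means tends to `d_k` (`abel`) and also to
`0`, hence `d_k = 0` (`const_eq_zero`).
-/

open Real Finset

/-- Mertens' constant `c₁ = γ - ∑ₚ (log(1/(1-1/p)) - 1/p)`. -/
noncomputable def mertensC1 : ℝ :=
  Real.eulerMascheroniConstant -
    ∑' p : Nat.Primes, (Real.log (1 / (1 - 1 / (p : ℝ))) - 1 / (p : ℝ))

/-- `S_k(x) = ∑_{p₁⋯p_k ≤ x} 1/(p₁⋯p_k)`, the sum over `k`-tuples of primes
with product at most `x`. -/
noncomputable def mertensS (k : ℕ) (x : ℝ) : ℝ :=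
  ∑' v : Fin k → Nat.Primes,
    if ((∏ i, ((v i : ℕ) : ℝ)) ≤ x) then 1 / ∏ i, ((v i : ℕ) : ℝ) else 0

/-- The coefficients `λ_{j,k}` of the polynomial `P_k`. -/
noncomputable def mertensLambda (j k : ℕ) : ℝ :=
  ∑ m ∈ Finset.range (k - j + 1),
    ((Nat.factorial k : ℝ) /
        ((Nat.factorial m : ℝ) * (Nat.factorial j : ℝ) * (Nat.factorial (k - m - j) : ℝ))) *
      (mertensC1 - Real.eulerMascheroniConstant) ^ (k - m - j) *
      iteratedDeriv m (fun t : ℝ => (Real.Gamma t)⁻¹) 1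

namespace GenMertens

/-! ### Dirichlet powers of the reciprocal prime weight and Mertens' first theorem -/

/-- The arithmetic function supported on the primes with value `1 / p` at `p`.  Its `k`-th Dirichlet
power carries the weights `1 / (p₁ ⋯ p_k)` of `mertensS k`. -/
noncomputable def recipPrime : ArithmeticFunction ℝ :=
  ⟨fun n => if n.Prime then (1 : ℝ) / n else 0, by simp⟩

lemma recipPrime_apply (n : ℕ) : recipPrime n = if n.Prime then (1 : ℝ) / n else 0 := rfl

lemma recipPrime_nonneg (n : ℕ) : 0 ≤ recipPrime n := by
  rw [recipPrime_apply]; split_ifs <;> positivity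

lemma recipPrime_pow_nonneg (k n : ℕ) : 0 ≤ (recipPrime ^ k) n := by
  induction k generalizing n with
  | zero =>
    rw [pow_zero, ArithmeticFunction.one_apply]; split_ifs <;> norm_num
  | succ k ih =>
    rw [pow_succ, ArithmeticFunction.mul_apply]
    exact sum_nonneg fun d _ => mul_nonneg (ih _) (recipPrime_nonneg _)

/-- The summatory function `∑_{n ≤ x} f n`. -/
noncomputable def summ (f : ArithmeticFunction ℝ) (x : ℝ) : ℝ := ∑ n ∈ Ioc 0 ⌊x⌋₊, f n

/-- `n ↦ f n * log n`, a derivation for Dirichlet convolution. -/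
noncomputable def logMul (f : ArithmeticFunction ℝ) : ArithmeticFunction ℝ :=
  ⟨fun n => f n * Real.log n, by simp⟩

lemma logMul_apply (f : ArithmeticFunction ℝ) (n : ℕ) : logMul f n = f n * Real.log n := rfl

lemma logMul_mul (f g : ArithmeticFunction ℝ) :
    logMul (f * g) = logMul f * g + f * logMul g := by
  ext n
  rw [logMul_apply, ArithmeticFunction.add_apply, ArithmeticFunction.mul_apply,
    ArithmeticFunction.mul_apply, ArithmeticFunction.mul_apply, sum_mul, ← sum_add_distrib]
  refine sum_congr rfl fun d hd => ?_
  obtain ⟨h, hn⟩ := Nat.mem_divisorsAntidiagonal.mp hd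
  have h1 : (d.1 : ℝ) ≠ 0 := by rintro h0; simp_all
  have h2 : (d.2 : ℝ) ≠ 0 := by rintro h0; simp_all
  rw [logMul_apply, logMul_apply, ← h, Nat.cast_mul, Real.log_mul h1 h2]
  ring

lemma logMul_one : logMul 1 = 0 := by
  ext n
  rw [logMul_apply, ArithmeticFunction.one_apply]
  split_ifs with h <;> simp [h]

lemma logMul_pow (f : ArithmeticFunction ℝ) (k : ℕ) :
    logMul (f ^ (k + 1)) = ((k : ℝ) + 1) • (f ^ k * logMul f) := by
  induction k with
  | zero => simp
  | succ k ih =>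
    have : ((k : ℝ) + 1) • (f ^ k * logMul f) * f = ((k : ℝ) + 1) • (f ^ (k + 1) * logMul f) := by
      rw [smul_mul_assoc, pow_succ, mul_assoc, mul_comm (logMul f), ← mul_assoc]
    rw [pow_succ, logMul_mul, ih, this, Nat.cast_add, Nat.cast_one, add_smul, add_smul, one_smul, add_smul, one_smul]

lemma summ_mul (f g : ArithmeticFunction ℝ) (x : ℝ) :
    summ (f * g) x = ∑ n ∈ Ioc 0 ⌊x⌋₊, f n * summ g (x / n) := by
  unfold summ
  rw [ArithmeticFunction.sum_Ioc_mul_eq_sum_sum]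
  simp_rw [Nat.floor_div_natCast]

lemma summ_one {x : ℝ} (hx : 1 ≤ x) : summ 1 x = 1 := by
  have : 1 ≤ ⌊x⌋₊ := (Nat.one_le_floor_iff _).mpr hx
  simp [summ, ArithmeticFunction.one_apply, this]

lemma summ_pow_nonneg (k : ℕ) (x : ℝ) : 0 ≤ summ (recipPrime ^ k) x :=
  sum_nonneg fun n _ => recipPrime_pow_nonneg k n

lemma summ_pow_mono (k : ℕ) : Monotone (summ (recipPrime ^ k)) := by
  intro x y h
  refine sum_le_sum_of_subset_of_nonneg ?_ fun n _ _ => recipPrime_pow_nonneg k n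
  exact Ioc_subset_Ioc_right (Nat.floor_le_floor h)

/-- Mertens' first theorem for `Λ`, at integers: from `log N! = ∑_{d ≤ N} Λ(d) ⌊N / d⌋` and
Chebyshev's bound `ψ(N) = O(N)`. -/
lemma abs_sum_vonMangoldt_div_sub_log (N : ℕ) (hN : 1 ≤ N) :
    |∑ n ∈ Ioc 0 N, ArithmeticFunction.vonMangoldt n / n - Real.log N| ≤ Real.log 4 + 4 := by
  have hN0 : (0 : ℝ) < N := by exact_mod_cast hN
  have h1 : ∑ n ∈ Ioc 0 N, Real.log n =
      ∑ n ∈ Ioc 0 N, ArithmeticFunction.vonMangoldt n * ((N / n : ℕ) : ℝ) := by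
    rw [← ArithmeticFunction.sum_Ioc_mul_zeta_eq_sum, ArithmeticFunction.vonMangoldt_mul_zeta]
    rfl
  have h2 : ∑ n ∈ Ioc 0 N, Real.log n = Real.log (N.factorial) := by
    rw [← Finset.prod_Ico_id_eq_factorial, Nat.cast_prod, Real.log_prod]
    · exact sum_congr (by ext; simp; omega) fun _ _ => rfl
    · intro i hi
      have := (Finset.mem_Ico.mp hi).1
      positivity
  have h3 := Stirling.le_log_factorial_stirling (n := N) (by omega)
  have h4 : Real.log N.factorial ≤ N * Real.log N := by
    rw [← Real.log_pow]
    refine Real.log_le_log (by exact_mod_cast N.factorial_pos) ?_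
    exact_mod_cast Nat.factorial_le_pow N
  have h5 : 0 ≤ Real.log N := Real.log_natCast_nonneg N
  have h6 : 0 ≤ Real.log (2 * Real.pi) := Real.log_nonneg (by linarith [Real.pi_gt_three])
  have h7 : ∑ n ∈ Ioc 0 N, ArithmeticFunction.vonMangoldt n ≤ (Real.log 4 + 4) * N := by
    have := Chebyshev.psi_le_const_mul_self (x := N) hN0.le
    simpa [Chebyshev.psi] using this
  have h8 : ∑ n ∈ Ioc 0 N, ArithmeticFunction.vonMangoldt n * ((N / n : ℕ) : ℝ) ≤
      N * ∑ n ∈ Ioc 0 N, ArithmeticFunction.vonMangoldt n / n := by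
    rw [mul_sum]
    refine sum_le_sum fun n _ => ?_
    have := @Nat.cast_div_le ℝ _ _ _ N n
    calc _ ≤ ArithmeticFunction.vonMangoldt n * ((N : ℝ) / n) :=
          mul_le_mul_of_nonneg_left this ArithmeticFunction.vonMangoldt_nonneg
      _ = _ := by ring
  have h9 : N * ∑ n ∈ Ioc 0 N, ArithmeticFunction.vonMangoldt n / n ≤
      ∑ n ∈ Ioc 0 N, ArithmeticFunction.vonMangoldt n * ((N / n : ℕ) : ℝ) +
        ∑ n ∈ Ioc 0 N, ArithmeticFunction.vonMangoldt n := by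
    rw [mul_sum, ← sum_add_distrib]
    refine sum_le_sum fun n _ => ?_
    have : (N : ℝ) / n ≤ ((N / n : ℕ) : ℝ) + 1 := by
      rw [← Nat.floor_div_eq_div (K := ℝ)]
      exact (Nat.lt_floor_add_one _).le
    calc _ = ArithmeticFunction.vonMangoldt n * ((N : ℝ) / n) := by ring
      _ ≤ ArithmeticFunction.vonMangoldt n * (((N / n : ℕ) : ℝ) + 1) :=
          mul_le_mul_of_nonneg_left this ArithmeticFunction.vonMangoldt_nonneg
      _ = _ := by ring
  have h10 : 0 ≤ Real.log 4 := Real.log_nonneg (by norm_num)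
  set T := ∑ n ∈ Ioc 0 N, ArithmeticFunction.vonMangoldt n / n
  rw [abs_le]
  constructor
  · have : N * (-1) ≤ N * (T - Real.log N) := by
      rw [h2] at h1; linarith
    have := le_of_mul_le_mul_left this hN0
    linarith
  · have : N * (T - Real.log N) ≤ N * (Real.log 4 + 4) := by
      rw [h2] at h1; linarith
    exact le_of_mul_le_mul_left this hN0

/-- Mertens' first theorem, `∑_{p ≤ x} log p / p = log x + O(1)`. -/
lemma mertens_first : ∃ C : ℝ, 0 ≤ C ∧ ∀ x : ℝ, 1 ≤ x →
    |summ (logMul recipPrime) x - Real.log x| ≤ C := by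
  have hs := ArithmeticFunction.vonMangoldt.summable_residueClass_non_primes_div
    (q := 1) (a := 0)
  set g : ℕ → ℝ := fun n => (if n.Prime then 0 else
    ArithmeticFunction.vonMangoldt.residueClass (q := 1) 0 n) / n with hg
  have hg0 : ∀ n, 0 ≤ g n := fun n => by
    have := ArithmeticFunction.vonMangoldt.residueClass_nonneg (q := 1) 0 n
    simp only [hg]; positivity
  have hsplit : ∀ n, ArithmeticFunction.vonMangoldt n / n = logMul recipPrime n + g n := by
    intro n
    simp only [hg, logMul_apply, recipPrime_apply]
    split_ifs with hp
    · rw [ArithmeticFunction.vonMangoldt_apply_prime hp]; ring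
    · have : (n : ZMod 1) = 0 := Subsingleton.elim _ _
      simp [ArithmeticFunction.vonMangoldt.residueClass, Set.indicator, this]
  refine ⟨Real.log 4 + 4 + (∑' n, g n) + 1, ?_, fun x hx => ?_⟩
  · have h10 : 0 ≤ Real.log 4 := Real.log_nonneg (by norm_num)
    have : 0 ≤ ∑' n, g n := tsum_nonneg hg0
    linarith
  have hN : 1 ≤ ⌊x⌋₊ := (Nat.one_le_floor_iff _).mpr hx
  have h1 := abs_le.mp (abs_sum_vonMangoldt_div_sub_log ⌊x⌋₊ hN)
  have h2 : ∑ n ∈ Ioc 0 ⌊x⌋₊, ArithmeticFunction.vonMangoldt n / n =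
      summ (logMul recipPrime) x + ∑ n ∈ Ioc 0 ⌊x⌋₊, g n := by
    rw [summ, ← sum_add_distrib]
    exact sum_congr rfl fun n _ => hsplit n
  have h3 : ∑ n ∈ Ioc 0 ⌊x⌋₊, g n ≤ ∑' n, g n := hs.sum_le_tsum _ fun n _ => hg0 n
  have h4 : 0 ≤ ∑ n ∈ Ioc 0 ⌊x⌋₊, g n := sum_nonneg fun n _ => hg0 n
  have hN0 : (1 : ℝ) ≤ ⌊x⌋₊ := by exact_mod_cast hN
  have h5 : Real.log ⌊x⌋₊ ≤ Real.log x := Real.log_le_log (by linarith) (Nat.floor_le (by linarith))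
  have h6 : Real.log x ≤ Real.log ⌊x⌋₊ + 1 := by
    have : x ≤ ⌊x⌋₊ * 2 := by linarith [Nat.lt_floor_add_one x]
    calc Real.log x ≤ Real.log (⌊x⌋₊ * 2) := Real.log_le_log (by linarith) this
      _ = Real.log ⌊x⌋₊ + Real.log 2 := Real.log_mul (by linarith) (by norm_num)
      _ ≤ _ := by linarith [Real.log_two_lt_d9]
  rw [abs_le]
  constructor <;> linarith

/-- Weighting by `log (p₁ ⋯ p_{k+1})` and using symmetry together with Mertens' first theorem gives
`∑ log(p₁⋯p_{k+1})/(p₁⋯p_{k+1}) = (k + 1) ∑_{n} (log x - log n + O(1))/n`, where `n = p₁ ⋯ p_k`. -/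
lemma summ_logMul_pow_succ : ∃ C : ℝ, 0 ≤ C ∧ ∀ (k : ℕ) (x : ℝ), 1 ≤ x →
    |summ (logMul (recipPrime ^ (k + 1))) x -
      (k + 1) * (Real.log x * summ (recipPrime ^ k) x - summ (logMul (recipPrime ^ k)) x)| ≤
      C * (k + 1) * summ (recipPrime ^ k) x := by
  obtain ⟨C, hC, h⟩ := mertens_first
  refine ⟨C, hC, fun k x hx => ?_⟩
  have e1 : summ (logMul (recipPrime ^ (k + 1))) x =
      (k + 1) * ∑ n ∈ Ioc 0 ⌊x⌋₊, (recipPrime ^ k) n * summ (logMul recipPrime) (x / n) := by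
    rw [← summ_mul, logMul_pow, summ, summ, mul_sum]
    rfl
  have e2 : Real.log x * summ (recipPrime ^ k) x - summ (logMul (recipPrime ^ k)) x =
      ∑ n ∈ Ioc 0 ⌊x⌋₊, (recipPrime ^ k) n * Real.log (x / n) := by
    rw [summ, summ, mul_sum, ← sum_sub_distrib]
    refine sum_congr rfl fun n hn => ?_
    have : (0 : ℝ) < n := by exact_mod_cast (Finset.mem_Ioc.mp hn).1
    rw [logMul_apply, Real.log_div (by linarith) this.ne']
    ring
  rw [e1, e2, ← mul_sub, ← sum_sub_distrib, abs_mul, abs_of_nonneg (by positivity : (0:ℝ) ≤ k + 1),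
    mul_comm C, mul_assoc]
  refine mul_le_mul_of_nonneg_left ?_ (by positivity)
  rw [summ, mul_sum]
  refine (abs_sum_le_sum_abs _ _).trans (sum_le_sum fun n hn => ?_)
  obtain ⟨hn0, hn1⟩ := Finset.mem_Ioc.mp hn
  have hn0' : (0 : ℝ) < n := by exact_mod_cast hn0
  rw [← mul_sub, abs_mul, abs_of_nonneg (recipPrime_pow_nonneg k n), mul_comm]
  refine mul_le_mul_of_nonneg_right (h _ ?_) (recipPrime_pow_nonneg k n)
  rw [le_div_iff₀ hn0', one_mul]
  exact (Nat.le_floor_iff (by linarith)).mp hn1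

end GenMertens

namespace GenMertens

/-! ### Tuples of primes -/

/-- A sum over the subtype of primes as a sum over all naturals against `recipPrime`. -/
lemma tsum_primes_eq (f : ℕ → ℝ) :
    ∑' p : Nat.Primes, 1 / (p : ℝ) * f p = ∑' n : ℕ, recipPrime n * f n := by
  have := tsum_subtype {n : ℕ | n.Prime} (fun n : ℕ => 1 / (n : ℝ) * f n)
  refine Eq.trans this (tsum_congr fun n => ?_)
  rw [recipPrime_apply, Set.indicator_apply]
  simp only [Set.mem_ofPred_eq]
  split_ifs <;> simp

lemma summable_mertensS (k : ℕ) (x : ℝ) : Summable fun v : Fin k → Nat.Primes =>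
    if ((∏ i, ((v i : ℕ) : ℝ)) ≤ x) then 1 / ∏ i, ((v i : ℕ) : ℝ) else 0 := by
  refine summable_of_hasFiniteSupport (Set.Finite.subset
    (s := Set.pi Set.univ fun _ : Fin k => {p : Nat.Primes | (p : ℕ) ≤ ⌊x⌋₊}) ?_ ?_)
  · refine Set.Finite.pi fun _ => ?_
    exact (Set.finite_Iic ⌊x⌋₊).preimage (fun a _ b _ h => Subtype.ext h)
  · intro v hv i _
    have h1 : ((∏ i, ((v i : ℕ) : ℝ)) ≤ x) := by
      by_contra h
      simp [h] at hv
    have h2 : (v i : ℕ) ≤ ∏ j, (v j : ℕ) :=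
      Nat.le_of_dvd (Finset.prod_pos fun j _ => (v j).2.pos)
        (Finset.dvd_prod_of_mem _ (Finset.mem_univ i))
    exact h2.trans (Nat.le_floor (by push_cast; exact h1))

/-- The sum over `k`-tuples of primes is the summatory function of the `k`-th Dirichlet power. -/
lemma mertensS_eq_summ (k : ℕ) (x : ℝ) : mertensS k x = summ (recipPrime ^ k) x := by
  induction k generalizing x with
  | zero =>
    rw [mertensS, tsum_fintype]
    by_cases hx : 1 ≤ x
    · rw [pow_zero, summ_one hx]; simp [hx]
    · have : ⌊x⌋₊ = 0 := Nat.floor_eq_zero.mpr (not_le.mp hx)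
      simp [hx, summ, this]
  | succ k ih =>
    have hs := summable_mertensS (k + 1) x
    rw [mertensS, ← (Fin.consEquiv fun _ => Nat.Primes).tsum_eq]
    rw [← (Fin.consEquiv fun _ => Nat.Primes).summable_iff] at hs
    have key : ∀ c : Nat.Primes × (Fin k → Nat.Primes),
        (if (∏ i, (((Fin.consEquiv fun _ => Nat.Primes) c i : ℕ) : ℝ)) ≤ x then
          1 / ∏ i, (((Fin.consEquiv fun _ => Nat.Primes) c i : ℕ) : ℝ) else 0) =
        1 / (c.1 : ℝ) * (if (∏ i, ((c.2 i : ℕ) : ℝ)) ≤ x / (c.1 : ℝ) then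
          1 / ∏ i, ((c.2 i : ℕ) : ℝ) else 0) := by
      intro c
      have hp : (0 : ℝ) < ((c.1 : ℕ) : ℝ) := by exact_mod_cast c.1.2.pos
      simp only [Fin.consEquiv_apply, Fin.prod_univ_succ, Fin.cons_zero, Fin.cons_succ,
        le_div_iff₀ hp, mul_comm ((c.1 : ℕ) : ℝ)]
      split_ifs
      · rw [one_div, one_div, one_div, mul_inv]; ring
      · simp
    have hs' := hs.congr (g := fun c : Nat.Primes × (Fin k → Nat.Primes) =>
      1 / (c.1 : ℝ) * (if (∏ i, ((c.2 i : ℕ) : ℝ)) ≤ x / (c.1 : ℝ) then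
          1 / ∏ i, ((c.2 i : ℕ) : ℝ) else 0)) key
    have hfib : ∀ p : Nat.Primes, Summable fun w : Fin k → Nat.Primes =>
        1 / (p : ℝ) * (if (∏ i, ((w i : ℕ) : ℝ)) ≤ x / (p : ℝ) then
          1 / ∏ i, ((w i : ℕ) : ℝ) else 0) :=
      fun p => (summable_mertensS k (x / (p : ℝ))).mul_left (1 / (p : ℝ))
    rw [tsum_congr key, Summable.tsum_prod' hs' hfib]
    simp_rw [tsum_mul_left]
    have : ∀ p : Nat.Primes, (∑' v : Fin k → Nat.Primes, if (∏ i, ((v i : ℕ) : ℝ)) ≤ x / (p : ℝ) then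
          1 / ∏ i, ((v i : ℕ) : ℝ) else 0) = summ (recipPrime ^ k) (x / p) := fun p => ih _
    simp_rw [this]
    rw [tsum_primes_eq fun n => summ (recipPrime ^ k) (x / n), pow_succ', summ_mul]
    refine tsum_eq_sum fun n hn => ?_
    rcases Nat.eq_zero_or_pos n with rfl | h0
    · simp
    have h1 : ⌊x⌋₊ < n := by
      by_contra h
      exact hn (Finset.mem_Ioc.mpr ⟨h0, not_lt.mp h⟩)
    have h2 : ⌊x / n⌋₊ = 0 := by
      rw [Nat.floor_div_natCast]
      exact Nat.div_eq_of_lt h1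
    simp [summ, h2]

end GenMertens

namespace GenMertens

open Filter Topology MeasureTheory

/-! ### Growth of powers of the iterated logarithm -/

lemma loglog_ge {x : ℝ} (hx : 2 ≤ x) : -1 ≤ Real.log (Real.log x) := by
  have h2 : Real.log 2 ≤ Real.log x := Real.log_le_log (by norm_num) hx
  have h3 := Real.log_two_gt_d9
  have h4 : Real.exp (-1) ≤ Real.log x := by
    have := Real.exp_one_gt_d9
    rw [Real.exp_neg, inv_le_comm₀ (Real.exp_pos _) (by linarith)]
    calc (Real.log x)⁻¹ ≤ (0.6 : ℝ)⁻¹ := by gcongr; linarith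
      _ ≤ _ := by norm_num; linarith
  have := Real.log_le_log (Real.exp_pos _) h4
  rwa [Real.log_exp] at this

lemma log_pos_of_two_le {x : ℝ} (hx : 2 ≤ x) : 0 < Real.log x := Real.log_pos (by linarith)

lemma poly_bound (p : Polynomial ℝ) {k : ℕ} (hp : p.natDegree ≤ k) :
    ∃ C : ℝ, 0 ≤ C ∧ ∀ y : ℝ, -1 ≤ y → |p.eval y| ≤ C * (y + 2) ^ k := by
  refine ⟨∑ i ∈ range (k + 1), |p.coeff i|, sum_nonneg fun _ _ => abs_nonneg _, fun y hy => ?_⟩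
  rw [Polynomial.eval_eq_sum_range' (Nat.lt_succ_of_le hp), sum_mul]
  refine (abs_sum_le_sum_abs _ _).trans (sum_le_sum fun i hi => ?_)
  rw [abs_mul, abs_pow]
  refine mul_le_mul_of_nonneg_left ?_ (abs_nonneg _)
  have h1 : |y| ≤ y + 2 := abs_le.mpr ⟨by linarith, by linarith⟩
  calc |y| ^ i ≤ (y + 2) ^ i := pow_le_pow_left₀ (abs_nonneg _) h1 i
    _ ≤ (y + 2) ^ k := pow_le_pow_right₀ (by linarith) (Nat.lt_succ_iff.mp (mem_range.mp hi))

lemma tendsto_log_add_pow_div (a : ℝ) (k : ℕ) :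
    Tendsto (fun u : ℝ => (Real.log u + a) ^ k / u) atTop (𝓝 0) := by
  have h1 := (Real.tendsto_pow_mul_exp_neg_atTop_nhds_zero k).comp
    (tendsto_atTop_add_const_right atTop a Real.tendsto_log_atTop)
  have h2 := h1.mul_const (Real.exp a)
  rw [zero_mul] at h2
  refine h2.congr' ?_
  filter_upwards [eventually_gt_atTop 0] with u hu
  simp only [Function.comp]
  rw [mul_assoc, ← Real.exp_add, show -(Real.log u + a) + a = -Real.log u by ring, Real.exp_neg,
    Real.exp_log hu]
  rfl

/-! ### Partial summation -/

lemma summ_sub_summ (f : ArithmeticFunction ℝ) {x y : ℝ} (hx : 2 ≤ x) (hxy : x ≤ y) :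
    summ f y - summ f x = summ (logMul f) y / Real.log y - summ (logMul f) x / Real.log x +
      ∫ t in x..y, summ (logMul f) t / (t * Real.log t ^ 2) ∧
    IntervalIntegrable (fun t => summ (logMul f) t / (t * Real.log t ^ 2)) volume x y := by
  have hder : ∀ t ∈ Set.Icc x y, HasDerivAt (fun t => (Real.log t)⁻¹)
      (-t⁻¹ / Real.log t ^ 2) t := fun t ht =>
    (Real.hasDerivAt_log (by linarith [ht.1])).inv (log_pos_of_two_le (hx.trans ht.1)).ne'
  have hderInt : IntegrableOn (deriv fun t => (Real.log t)⁻¹) (Set.Icc x y) := by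
    refine IntegrableOn.congr_fun (f := fun t => -t⁻¹ / Real.log t ^ 2) ?_
      (fun t ht => (hder t ht).deriv.symm) measurableSet_Icc
    refine ContinuousOn.integrableOn_Icc fun t ht => ContinuousAt.continuousWithinAt ?_
    have h1 := (log_pos_of_two_le (hx.trans ht.1)).ne'
    have h0 : t ≠ 0 := by linarith [ht.1]
    have := Real.continuousAt_log h0
    fun_prop (disch := positivity)
  have hc : ∀ N : ℕ, ∑ n ∈ Icc 0 N, logMul f n = ∑ n ∈ Ioc 0 N, logMul f n := by
    intro N
    rw [← Finset.add_sum_Ioc_eq_sum_Icc (Nat.zero_le N)]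
    simp
  have key := sum_mul_eq_sub_sub_integral_mul (fun n => logMul f n) (f := fun t => (Real.log t)⁻¹)
    (by linarith) hxy (fun t ht => (hder t ht).differentiableAt) hderInt
  have key2 := integrableOn_mul_sum_Icc (m := 0) (fun n => logMul f n) (by linarith : 0 ≤ x) hderInt
  simp_rw [hc] at key key2
  have hL : ∑ n ∈ Ioc ⌊x⌋₊ ⌊y⌋₊, (Real.log n)⁻¹ * logMul f n = summ f y - summ f x := by
    rw [summ, summ, ← Finset.sum_Ioc_consecutive _ (Nat.zero_le _) (Nat.floor_le_floor hxy),
      add_sub_cancel_left]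
    refine sum_congr rfl fun n hn => ?_
    have h2 : 2 ≤ ⌊x⌋₊ := Nat.le_floor (by simpa using hx)
    have h3 : 2 ≤ n := h2.trans (Finset.mem_Ioc.mp hn).1.le
    have := log_pos_of_two_le (x := n) (by exact_mod_cast h3)
    rw [logMul_apply]
    field_simp
  have hcongr : Set.EqOn (fun t => deriv (fun t => (Real.log t)⁻¹) t * summ (logMul f) t)
      (fun t => -(summ (logMul f) t / (t * Real.log t ^ 2))) (Set.Icc x y) := by
    intro t ht
    have h0 : t ≠ 0 := by linarith [ht.1]
    have h1 := (log_pos_of_two_le (hx.trans ht.1)).ne'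
    simp only [(hder t ht).deriv]
    field_simp
  have key3 := key2.congr_fun hcongr measurableSet_Icc
  constructor
  · rw [hL] at key
    rw [key]
    have : ∫ t in Set.Ioc x y, deriv (fun t => (Real.log t)⁻¹) t * summ (logMul f) t =
        - ∫ t in x..y, summ (logMul f) t / (t * Real.log t ^ 2) := by
      rw [setIntegral_congr_fun measurableSet_Ioc (hcongr.mono Set.Ioc_subset_Icc_self),
        integral_neg, intervalIntegral.integral_of_le hxy]
    simp only [summ] at this ⊢
    rw [this]
    ring
  · rw [intervalIntegrable_iff_integrableOn_Icc_of_le hxy]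
    simpa using key3.neg

/-- The majorant `(log log x + 2 k + 2)^k / log x`, shifted so that it decreases on `[2, ∞)`. -/
noncomputable def majorant (k : ℕ) (x : ℝ) : ℝ :=
  (Real.log (Real.log x) + (2 * k + 2)) ^ k / Real.log x

/-- Minus the derivative of `2 * majorant k`. -/
noncomputable def majorantDeriv (k : ℕ) (t : ℝ) : ℝ :=
  2 * ((Real.log (Real.log t) + (2 * k + 2)) ^ k -
    k * (Real.log (Real.log t) + (2 * k + 2)) ^ (k - 1)) / (t * Real.log t ^ 2)

lemma hasDerivAt_loglog {t : ℝ} (ht : 2 ≤ t) :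
    HasDerivAt (fun t => Real.log (Real.log t)) (t⁻¹ / Real.log t) t :=
  (Real.hasDerivAt_log (by linarith)).log (log_pos_of_two_le ht).ne'

lemma hasDerivAt_majorant (k : ℕ) {t : ℝ} (ht : 2 ≤ t) :
    HasDerivAt (fun t => -2 * majorant k t) (majorantDeriv k t) t := by
  have hl := log_pos_of_two_le ht
  have h0 : t ≠ 0 := by linarith
  have h := ((((hasDerivAt_loglog ht).add_const (2 * (k : ℝ) + 2)).pow k).div
    (Real.hasDerivAt_log h0) hl.ne').const_mul (-2)
  convert! h using 1
  rw [majorantDeriv]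
  simp only [Pi.pow_apply]
  field_simp
  ring

lemma pow_le_majorantDeriv (k : ℕ) {t : ℝ} (ht : 2 ≤ t) :
    (Real.log (Real.log t) + 2) ^ k / (t * Real.log t ^ 2) ≤ majorantDeriv k t := by
  have hl := log_pos_of_two_le ht
  have hll := loglog_ge ht
  rw [majorantDeriv]
  refine div_le_div_of_nonneg_right ?_ (by positivity)
  set a := Real.log (Real.log t) + (2 * k + 2) with ha
  have hk : (0 : ℝ) ≤ k := Nat.cast_nonneg k
  have h1 : (Real.log (Real.log t) + 2) ^ k ≤ a ^ k :=
    pow_le_pow_left₀ (by linarith) (by linarith) k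
  rcases Nat.eq_zero_or_pos k with rfl | hk0
  · norm_num
  have h2 : a ^ k = a ^ (k - 1) * a := by rw [← pow_succ, Nat.sub_add_cancel hk0]
  have h3 : 0 ≤ a ^ (k - 1) * (a - 2 * k) :=
    mul_nonneg (pow_nonneg (by linarith) _) (by linarith)
  nlinarith

lemma majorantDeriv_nonneg (k : ℕ) {t : ℝ} (ht : 2 ≤ t) : 0 ≤ majorantDeriv k t := by
  have hl := log_pos_of_two_le ht
  have hll := loglog_ge ht
  refine le_trans ?_ (pow_le_majorantDeriv k ht)
  have : 0 ≤ Real.log (Real.log t) + 2 := by linarith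
  positivity

lemma continuousOn_majorantDeriv (k : ℕ) {x y : ℝ} (hx : 2 ≤ x) :
    ContinuousOn (majorantDeriv k) (Set.Icc x y) := by
  intro t ht
  have hl := (log_pos_of_two_le (hx.trans ht.1)).ne'
  have h0 : t ≠ 0 := by linarith [ht.1]
  have h1 := (hasDerivAt_loglog (hx.trans ht.1)).continuousAt
  have h2 := Real.continuousAt_log h0
  refine ContinuousAt.continuousWithinAt ?_
  unfold majorantDeriv
  fun_prop (disch := positivity)

lemma integral_majorantDeriv (k : ℕ) {x y : ℝ} (hx : 2 ≤ x) (hxy : x ≤ y) :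
    ∫ t in x..y, majorantDeriv k t = 2 * majorant k x - 2 * majorant k y := by
  rw [intervalIntegral.integral_eq_sub_of_hasDerivAt (f := fun t => -2 * majorant k t)]
  · ring
  · intro t ht
    rw [Set.uIcc_of_le hxy] at ht
    exact hasDerivAt_majorant k (hx.trans ht.1)
  · refine ContinuousOn.intervalIntegrable ?_
    rw [Set.uIcc_of_le hxy]
    exact continuousOn_majorantDeriv k hx

lemma majorant_anti (k : ℕ) {x y : ℝ} (hx : 2 ≤ x) (hxy : x ≤ y) :
    majorant k y ≤ majorant k x := by
  have h1 := integral_majorantDeriv k hx hxy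
  have h2 : 0 ≤ ∫ t in x..y, majorantDeriv k t :=
    intervalIntegral.integral_nonneg hxy fun t ht => majorantDeriv_nonneg k (hx.trans ht.1)
  linarith

lemma pow_le_majorant (k : ℕ) {x : ℝ} (hx : 2 ≤ x) :
    (Real.log (Real.log x) + 2) ^ k / Real.log x ≤ majorant k x := by
  have hl := log_pos_of_two_le hx
  have hll := loglog_ge hx
  refine div_le_div_of_nonneg_right (pow_le_pow_left₀ (by linarith) ?_ k) hl.le
  have hk : (0 : ℝ) ≤ k := Nat.cast_nonneg k
  linarith

lemma majorant_le (k : ℕ) {x : ℝ} (hx : 2 ≤ x) :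
    majorant k x ≤ (2 * k + 2) ^ k * ((Real.log (Real.log x) + 2) ^ k / Real.log x) := by
  have hl := log_pos_of_two_le hx
  have hll := loglog_ge hx
  rw [← mul_div_assoc, ← mul_pow]
  have hk : (0 : ℝ) ≤ k := Nat.cast_nonneg k
  refine div_le_div_of_nonneg_right (pow_le_pow_left₀ (by linarith) ?_ k) hl.le
  nlinarith

lemma tendsto_majorant (k : ℕ) : Tendsto (majorant k) atTop (𝓝 0) :=
  (tendsto_log_add_pow_div _ k).comp Real.tendsto_log_atTop

/-- An asymptotic `∑_{n ≤ x} f(n) log n = log x · R(log log x) + O((log log x + 2)^k)` gives,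
by partial summation, `∑_{n ≤ x} f(n) = Q(log log x) + d + O((log log x + 2)^k / log x)` for every
`Q` with `Q' = R + R'`. -/
lemma exists_const_of_logMul (f : ArithmeticFunction ℝ) (Q R : Polynomial ℝ)
    (hQ : Polynomial.derivative Q = R + Polynomial.derivative R) (k : ℕ) (C : ℝ)
    (hB : ∀ x : ℝ, 2 ≤ x → |summ (logMul f) x - Real.log x * R.eval (Real.log (Real.log x))| ≤
      C * (Real.log (Real.log x) + 2) ^ k) :
    ∃ d C' : ℝ, 0 ≤ C' ∧ Tendsto (fun x => summ f x - Q.eval (Real.log (Real.log x))) atTop (𝓝 d) ∧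
      ∀ x : ℝ, 2 ≤ x → |summ f x - Q.eval (Real.log (Real.log x)) - d| ≤
        C' * ((Real.log (Real.log x) + 2) ^ k / Real.log x) := by
  have hC : 0 ≤ C := by
    have := (abs_nonneg _).trans (hB 2 le_rfl)
    have h2 : 0 < (Real.log (Real.log 2) + 2) ^ k :=
      pow_pos (by linarith [loglog_ge (le_refl 2)]) k
    exact nonneg_of_mul_nonneg_left this h2
  set F : ℝ → ℝ := fun x => summ f x - Q.eval (Real.log (Real.log x)) with hF
  set E : ℝ → ℝ := fun x => summ (logMul f) x - Real.log x * R.eval (Real.log (Real.log x)) with hE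
  have hEdiv : ∀ x, 2 ≤ x → |E x / Real.log x| ≤ C * majorant k x := by
    intro x hx
    have hl := log_pos_of_two_le hx
    rw [abs_div, abs_of_pos hl]
    calc |E x| / Real.log x ≤ C * (Real.log (Real.log x) + 2) ^ k / Real.log x := by
          gcongr; exact hB x hx
      _ = C * ((Real.log (Real.log x) + 2) ^ k / Real.log x) := by ring
      _ ≤ _ := mul_le_mul_of_nonneg_left (pow_le_majorant k hx) hC
  have hdiff : ∀ x y, 2 ≤ x → x ≤ y → |F y - F x| ≤ 4 * C * majorant k x := by
    intro x y hx hxy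
    have hy := hx.trans hxy
    obtain ⟨hS, hI⟩ := summ_sub_summ f hx hxy
    have hcontR : ContinuousOn (fun t => R.eval (Real.log (Real.log t)) * (t⁻¹ / Real.log t))
        (Set.Icc x y) := by
      intro t ht
      have hl := (log_pos_of_two_le (hx.trans ht.1)).ne'
      have h0 : t ≠ 0 := by linarith [ht.1]
      have h1 := (hasDerivAt_loglog (hx.trans ht.1)).continuousAt
      have h2 := Real.continuousAt_log h0
      have h3 : ContinuousAt (fun t => R.eval (Real.log (Real.log t))) t :=
        ContinuousAt.comp (g := fun y => R.eval y) R.continuous.continuousAt h1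
      refine ContinuousAt.continuousWithinAt ?_
      fun_prop (disch := assumption)
    have hIR : IntervalIntegrable (fun t => R.eval (Real.log (Real.log t)) * (t⁻¹ / Real.log t))
        volume x y := by
      refine ContinuousOn.intervalIntegrable ?_
      rwa [Set.uIcc_of_le hxy]
    have hFTC : ∫ t in x..y, R.eval (Real.log (Real.log t)) * (t⁻¹ / Real.log t) =
        (Q - R).eval (Real.log (Real.log y)) - (Q - R).eval (Real.log (Real.log x)) := by
      refine intervalIntegral.integral_eq_sub_of_hasDerivAt
        (f := fun t => (Q - R).eval (Real.log (Real.log t))) (fun t ht => ?_) hIR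
      rw [Set.uIcc_of_le hxy] at ht
      have h := ((Q - R).hasDerivAt (Real.log (Real.log t))).comp t
        (hasDerivAt_loglog (hx.trans ht.1))
      rw [Polynomial.derivative_sub, hQ, add_sub_cancel_right] at h
      exact h
    have hsplit : ∫ t in x..y, summ (logMul f) t / (t * Real.log t ^ 2) =
        (∫ t in x..y, R.eval (Real.log (Real.log t)) * (t⁻¹ / Real.log t)) +
        ∫ t in x..y, (summ (logMul f) t / (t * Real.log t ^ 2) -
          R.eval (Real.log (Real.log t)) * (t⁻¹ / Real.log t)) := by
      rw [intervalIntegral.integral_sub hI hIR]; ring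
    have hIE : |∫ t in x..y, (summ (logMul f) t / (t * Real.log t ^ 2) -
          R.eval (Real.log (Real.log t)) * (t⁻¹ / Real.log t))| ≤
        C * (2 * majorant k x - 2 * majorant k y) := by
      rw [← integral_majorantDeriv k hx hxy, ← intervalIntegral.integral_const_mul, ← Real.norm_eq_abs]
      refine intervalIntegral.norm_integral_le_of_norm_le hxy ?_ ?_
      · refine Filter.Eventually.of_forall fun t ht => ?_
        have ht2 : 2 ≤ t := hx.trans ht.1.le
        have hl := log_pos_of_two_le ht2
        have h0 : 0 < t := by linarith
        have he : summ (logMul f) t / (t * Real.log t ^ 2) -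
            R.eval (Real.log (Real.log t)) * (t⁻¹ / Real.log t) = E t / (t * Real.log t ^ 2) := by
          simp only [hE]; field_simp
        rw [he, Real.norm_eq_abs, abs_div, abs_of_pos (by positivity : 0 < t * Real.log t ^ 2)]
        calc |E t| / (t * Real.log t ^ 2)
            ≤ C * (Real.log (Real.log t) + 2) ^ k / (t * Real.log t ^ 2) := by
              gcongr; exact hB t ht2
          _ = C * ((Real.log (Real.log t) + 2) ^ k / (t * Real.log t ^ 2)) := by ring
          _ ≤ _ := mul_le_mul_of_nonneg_left (pow_le_majorantDeriv k ht2) hC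
      · refine (ContinuousOn.intervalIntegrable ?_).const_mul C
        rw [Set.uIcc_of_le hxy]
        exact continuousOn_majorantDeriv k hx
    have hlx := (log_pos_of_two_le hx).ne'
    have hly := (log_pos_of_two_le hy).ne'
    have hid : F y - F x = E y / Real.log y - E x / Real.log x +
        ∫ t in x..y, (summ (logMul f) t / (t * Real.log t ^ 2) -
          R.eval (Real.log (Real.log t)) * (t⁻¹ / Real.log t)) := by
      rw [hsplit, hFTC, Polynomial.eval_sub, Polynomial.eval_sub] at hS
      have e1 : E y / Real.log y =
          summ (logMul f) y / Real.log y - R.eval (Real.log (Real.log y)) := by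
        simp only [hE]; field_simp
      have e2 : E x / Real.log x =
          summ (logMul f) x / Real.log x - R.eval (Real.log (Real.log x)) := by
        simp only [hE]; field_simp
      rw [e1, e2]
      simp only [hF]
      linarith
    have a1 := abs_le.mp (hEdiv x hx)
    have a2 := abs_le.mp (hEdiv y hy)
    have a3 := abs_le.mp hIE
    have a4 := mul_le_mul_of_nonneg_left (majorant_anti k hx hxy) hC
    have a5 : 0 ≤ C * majorant k y := (abs_nonneg _).trans (hEdiv y hy)
    rw [hid, abs_le]
    constructor <;> linarith
  have hcauchy : CauchySeq fun x : ℝ => F (max x 2) := by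
    refine cauchySeq_of_le_tendsto_0' (fun x : ℝ => 4 * C * majorant k (max x 2)) ?_ ?_
    · intro x y hxy
      rw [dist_comm, Real.dist_eq]
      exact hdiff _ _ (le_max_right _ _) (max_le_max_right _ hxy)
    · have : Tendsto (fun x : ℝ => max x 2) atTop atTop :=
        tendsto_atTop_mono (fun x => le_max_left x 2) tendsto_id
      simpa using ((tendsto_majorant k).comp this).const_mul (4 * C)
  obtain ⟨d, hd⟩ := cauchySeq_tendsto_of_complete hcauchy
  have hd' : Tendsto F atTop (𝓝 d) := by
    refine hd.congr' ?_
    filter_upwards [eventually_ge_atTop 2] with x hx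
    rw [max_eq_left hx]
  refine ⟨d, 4 * C * (2 * k + 2) ^ k, by positivity, hd', fun x hx => ?_⟩
  have h1 : |d - F x| ≤ 4 * C * majorant k x := by
    refine le_of_tendsto (hd'.sub_const (F x)).abs ?_
    filter_upwards [eventually_ge_atTop x] with y hy
    exact hdiff x y hx hy
  rw [abs_sub_comm] at h1
  calc |F x - d| ≤ 4 * C * majorant k x := h1
    _ ≤ 4 * C * ((2 * k + 2) ^ k * ((Real.log (Real.log x) + 2) ^ k / Real.log x)) :=
        mul_le_mul_of_nonneg_left (majorant_le k hx) (by positivity)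
    _ = _ := by ring

end GenMertens

namespace GenMertens

open Filter Topology MeasureTheory Polynomial

/-! ### The induction on the number of prime factors -/

/-- The polynomials governing `∑_{n ≤ x} f(n) log n / log x` for `f = recipPrime ^ k`, given the
ones governing `∑_{n ≤ x} f(n)`. -/
noncomputable def logPoly (P : ℕ → ℝ[X]) : ℕ → ℝ[X]
  | 0 => 0
  | k + 1 => C ((k : ℝ) + 1) * (P k - logPoly P k)

lemma derivative_eq_logPoly {P : ℕ → ℝ[X]} (h0 : P 0 = 1)
    (hder : ∀ k, derivative (P (k + 1)) = C ((k : ℝ) + 1) * P k) (k : ℕ) :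
    derivative (P k) = logPoly P k + derivative (logPoly P k) := by
  induction k with
  | zero => simp [h0, logPoly]
  | succ k ih =>
    rw [hder, logPoly, derivative_C_mul, derivative_sub, ih]
    ring

lemma natDegree_logPoly {P : ℕ → ℝ[X]} (hdeg : ∀ k, (P k).natDegree ≤ k) (k : ℕ) :
    (logPoly P k).natDegree ≤ k - 1 := by
  induction k with
  | zero => simp [logPoly]
  | succ k ih =>
    rw [logPoly]
    refine (natDegree_C_mul_le _ _).trans ((natDegree_sub_le _ _).trans ?_)
    have := hdeg k
    omega

lemma pow_sub_one_div_log_le (k : ℕ) : ∃ C : ℝ, 0 ≤ C ∧ ∀ x : ℝ, 2 ≤ x →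
    (Real.log (Real.log x) + 2) ^ (k - 1) / Real.log x ≤
      C * (Real.log (Real.log x) + 2) ^ k := by
  refine ⟨(Real.log 2)⁻¹, inv_nonneg.mpr (Real.log_nonneg (by norm_num)), fun x hx => ?_⟩
  have h1 : Real.log 2 ≤ Real.log x := Real.log_le_log (by norm_num) hx
  have h2 : 0 < Real.log 2 := Real.log_pos (by norm_num)
  have h3 := loglog_ge hx
  rw [div_eq_inv_mul]
  refine mul_le_mul (inv_anti₀ h2 h1) (pow_le_pow_right₀ (by linarith) (Nat.sub_le _ _))
    (pow_nonneg (by linarith) _) (inv_nonneg.mpr h2.le)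

/-- The estimate for all `k`, for polynomials with `P_{k+1}' = (k+1) P_k` whose constant terms are
the right ones, in the sense that no other constant can be a limit of `S_k - P_k(log log)`. -/
lemma summ_pow_asymp {P : ℕ → ℝ[X]} (h0 : P 0 = 1)
    (hder : ∀ k, derivative (P (k + 1)) = C ((k : ℝ) + 1) * P k)
    (hdeg : ∀ k, (P k).natDegree ≤ k)
    (hlim : ∀ (k : ℕ) (d : ℝ), Tendsto (fun x : ℝ => summ (recipPrime ^ k) x -
      (P k).eval (Real.log (Real.log x))) atTop (𝓝 d) → d = 0) (k : ℕ) :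
    (∃ c : ℝ, 0 ≤ c ∧ ∀ x : ℝ, 2 ≤ x →
      |summ (recipPrime ^ k) x - (P k).eval (Real.log (Real.log x))| ≤
        c * ((Real.log (Real.log x) + 2) ^ (k - 1) / Real.log x)) ∧
    (∃ c : ℝ, 0 ≤ c ∧ ∀ x : ℝ, 2 ≤ x →
      |summ (logMul (recipPrime ^ k)) x -
        Real.log x * (logPoly P k).eval (Real.log (Real.log x))| ≤
          c * (Real.log (Real.log x) + 2) ^ (k - 1)) := by
  induction k with
  | zero =>
    refine ⟨⟨0, le_rfl, fun x hx => ?_⟩, ⟨0, le_rfl, fun x hx => ?_⟩⟩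
    · rw [pow_zero, summ_one (by linarith), h0]; simp
    · rw [pow_zero, logMul_one]; simp [summ, logPoly]
  | succ k ih =>
    obtain ⟨⟨c1, hc1, h1⟩, ⟨c2, hc2, h2⟩⟩ := ih
    obtain ⟨c3, hc3, h3⟩ := summ_logMul_pow_succ
    obtain ⟨c4, hc4, h4⟩ := poly_bound (P k) (hdeg k)
    obtain ⟨c5, hc5, h5⟩ := pow_sub_one_div_log_le k
    have hB : ∀ x : ℝ, 2 ≤ x → |summ (logMul (recipPrime ^ (k + 1))) x -
        Real.log x * (logPoly P (k + 1)).eval (Real.log (Real.log x))| ≤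
        (c3 * (k + 1) * (c1 * c5 + c4) + (k + 1) * (c1 + c2)) *
          (Real.log (Real.log x) + 2) ^ k := by
      intro x hx
      have hl := log_pos_of_two_le hx
      have hll := loglog_ge hx
      set l := Real.log (Real.log x) with hldef
      have hk : (0 : ℝ) ≤ k := Nat.cast_nonneg k
      have e1 := h1 x hx
      have e2 := h2 x hx
      have e3 := h3 k x (by linarith)
      have e4 := h4 l hll
      have e5 := h5 x hx
      rw [← hldef] at e1 e2 e5
      have hmono : (l + 2) ^ (k - 1) ≤ (l + 2) ^ k :=
        pow_le_pow_right₀ (by linarith) (Nat.sub_le _ _)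
      set S := summ (recipPrime ^ k) x
      set B := summ (logMul (recipPrime ^ k)) x
      have hS : S ≤ (c1 * c5 + c4) * (l + 2) ^ k := by
        have a1 := (abs_le.mp e1).2
        have a2 := (abs_le.mp e4).2
        have a3 := mul_le_mul_of_nonneg_left e5 hc1
        nlinarith
      have hLS : |Real.log x * (S - (P k).eval l)| ≤ c1 * (l + 2) ^ k := by
        rw [abs_mul, abs_of_pos hl]
        calc Real.log x * |S - (P k).eval l|
            ≤ Real.log x * (c1 * ((l + 2) ^ (k - 1) / Real.log x)) := by gcongr
          _ = c1 * (l + 2) ^ (k - 1) := by field_simp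
          _ ≤ _ := by gcongr
      have hBB : |B - Real.log x * (logPoly P k).eval l| ≤ c2 * (l + 2) ^ k :=
        e2.trans (by gcongr)
      rw [logPoly, eval_mul, eval_C, eval_sub]
      have hsplit : summ (logMul (recipPrime ^ (k + 1))) x -
          Real.log x * (((k : ℝ) + 1) * ((P k).eval l - (logPoly P k).eval l)) =
          (summ (logMul (recipPrime ^ (k + 1))) x - (k + 1) * (Real.log x * S - B)) +
          (k + 1) * (Real.log x * (S - (P k).eval l) -
            (B - Real.log x * (logPoly P k).eval l)) := by ring
      rw [hsplit]
      refine (abs_add_le _ _).trans ?_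
      have b1 : |(k + 1) * (Real.log x * (S - (P k).eval l) -
            (B - Real.log x * (logPoly P k).eval l))| ≤
          (k + 1) * (c1 * (l + 2) ^ k + c2 * (l + 2) ^ k) := by
        rw [abs_mul, abs_of_nonneg (by linarith : (0 : ℝ) ≤ k + 1)]
        gcongr
        exact (abs_sub _ _).trans (add_le_add hLS hBB)
      have b2 : c3 * (k + 1) * S ≤ c3 * (k + 1) * ((c1 * c5 + c4) * (l + 2) ^ k) :=
        mul_le_mul_of_nonneg_left hS (by positivity)
      calc _ ≤ c3 * (k + 1) * ((c1 * c5 + c4) * (l + 2) ^ k) +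
            (k + 1) * (c1 * (l + 2) ^ k + c2 * (l + 2) ^ k) :=
            add_le_add (e3.trans b2) b1
        _ = _ := by ring
    obtain ⟨d, c, hc, hd, hbound⟩ := exists_const_of_logMul (recipPrime ^ (k + 1)) (P (k + 1))
      (logPoly P (k + 1)) (derivative_eq_logPoly h0 hder (k + 1)) k _ hB
    obtain rfl := hlim (k + 1) d hd
    refine ⟨⟨c, hc, fun x hx => ?_⟩, ⟨_, by positivity, hB⟩⟩
    simpa using hbound x hx

end GenMertens

namespace GenMertens

open Filter Topology MeasureTheory Polynomial ProbabilityTheory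

/-! ### Logarithmic moments of the exponential distribution -/

/-- The standard exponential distribution, with density `e^{-v}` on `(0, ∞)`. -/
noncomputable def expDist : Measure ℝ :=
  (volume.restrict (Set.Ioi 0)).withDensity fun v => ENNReal.ofReal (Real.exp (-v))

lemma measurable_dens : Measurable fun v : ℝ => ENNReal.ofReal (Real.exp (-v)) := by fun_prop

lemma integral_expDist (g : ℝ → ℝ) :
    ∫ v, g v ∂expDist = ∫ v in Set.Ioi 0, Real.exp (-v) * g v := by
  rw [expDist, integral_withDensity_eq_integral_toReal_smul measurable_dens (by simp)]
  simp [ENNReal.toReal_ofReal (Real.exp_pos _).le]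

lemma integrable_expDist_iff (g : ℝ → ℝ) :
    Integrable g expDist ↔ IntegrableOn (fun v => Real.exp (-v) * g v) (Set.Ioi 0) := by
  rw [expDist, integrable_withDensity_iff_integrable_smul' measurable_dens (by simp)]
  simp [ENNReal.toReal_ofReal (Real.exp_pos _).le, IntegrableOn]

lemma ae_expDist_pos : ∀ᵐ v ∂expDist, 0 < v := by
  have h1 : expDist ≪ volume.restrict (Set.Ioi 0) := withDensity_absolutelyContinuous _ _
  exact h1.ae_le (ae_restrict_mem measurableSet_Ioi)

instance : IsProbabilityMeasure expDist := by
  have h : Integrable (fun _ : ℝ => (1 : ℝ)) expDist := by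
    rw [integrable_expDist_iff]
    simpa using Real.GammaIntegral_convergent one_pos
  have h2 : IsFiniteMeasure expDist := (integrable_const_iff_isFiniteMeasure one_ne_zero).mp h
  have h3 : ∫ _, (1 : ℝ) ∂expDist = 1 := by
    have h4 := Real.Gamma_eq_integral one_pos
    rw [Real.Gamma_one] at h4
    refine (integral_expDist _).trans (Eq.trans ?_ h4.symm)
    exact setIntegral_congr_fun measurableSet_Ioi fun v _ => by simp
  rw [integral_const, smul_eq_mul, mul_one] at h3
  constructor
  rw [← ENNReal.ofReal_toReal (measure_ne_top expDist Set.univ)]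
  rw [Measure.real] at h3
  rw [h3, ENNReal.ofReal_one]

lemma exp_mul_log_ae (t : ℝ) : ∀ v ∈ Set.Ioi (0 : ℝ),
    Real.exp (-v) * Real.exp (t * Real.log v) = Real.exp (-v) * v ^ (t + 1 - 1) := by
  intro v hv
  rw [Real.rpow_def_of_pos hv, add_sub_cancel_right, mul_comm t]

lemma mgf_log {t : ℝ} (ht : -1 < t) : mgf Real.log expDist t = Real.Gamma (t + 1) := by
  rw [mgf, integral_expDist, Real.Gamma_eq_integral (by linarith)]
  exact setIntegral_congr_fun measurableSet_Ioi (exp_mul_log_ae t)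

lemma zero_mem_interior : 0 ∈ interior (integrableExpSet Real.log expDist) := by
  rw [mem_interior_iff_mem_nhds]
  filter_upwards [Ioi_mem_nhds (show (-1 : ℝ) < 0 by norm_num)] with t ht
  rw [integrableExpSet, Set.mem_ofPred_eq, integrable_expDist_iff]
  refine (Real.GammaIntegral_convergent (s := t + 1) (by linarith [Set.mem_Ioi.mp ht])).congr_fun
    (fun v hv => (exp_mul_log_ae t v hv).symm) measurableSet_Ioi

lemma integrable_log_pow (n : ℕ) : Integrable (fun v => Real.log v ^ n) expDist :=
  integrable_pow_of_mem_interior_integrableExpSet zero_mem_interior n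

lemma integrable_abs_log_pow (n : ℕ) : Integrable (fun v => |Real.log v| ^ n) expDist :=
  integrable_pow_abs_of_mem_interior_integrableExpSet zero_mem_interior n

/-- The moments `∫ log^n v e^{-v} dv = Γ^{(n)}(1)`. -/
noncomputable def logMoment (n : ℕ) : ℝ := ∫ v, Real.log v ^ n ∂expDist

/-- The Taylor coefficients, up to factorials, of `1/Γ` at `1`. -/
noncomputable def invGammaDeriv (m : ℕ) : ℝ :=
  iteratedDeriv m (fun t : ℝ => (Real.Gamma t)⁻¹) 1

lemma mgf_log_eventually :
    mgf Real.log expDist =ᶠ[𝓝 0] fun t => Real.Gamma (t + 1) := by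
  filter_upwards [Ioi_mem_nhds (show (-1 : ℝ) < 0 by norm_num)] with t ht
  exact mgf_log ht

/-- Leibniz' rule for `Γ · (1/Γ) = 1` at `1`. -/
lemma sum_choose_logMoment (n : ℕ) :
    ∑ i ∈ range (n + 1), (n.choose i : ℝ) * logMoment i * invGammaDeriv (n - i) =
      if n = 0 then 1 else 0 := by
  have hM : ∀ i, iteratedDeriv i (mgf Real.log expDist) 0 = logMoment i := fun i => by
    rw [iteratedDeriv_mgf_zero zero_mem_interior]; rfl
  have hG : ∀ m, iteratedDeriv m (fun t : ℝ => (Real.Gamma (t + 1))⁻¹) 0 = invGammaDeriv m := by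
    intro m
    have := congrFun (iteratedDeriv_comp_add_const m (fun t : ℝ => (Real.Gamma t)⁻¹) 1) 0
    rw [this, zero_add, invGammaDeriv]
  have hA : AnalyticAt ℝ (mgf Real.log expDist) 0 := analyticAt_mgf zero_mem_interior
  have hB : AnalyticAt ℝ (fun t : ℝ => (Real.Gamma (t + 1))⁻¹) 0 := by
    have h := hA.congr mgf_log_eventually
    exact h.fun_inv (by simp)
  have hone : (mgf Real.log expDist * fun t : ℝ => (Real.Gamma (t + 1))⁻¹) =ᶠ[𝓝 0]
      fun _ => (1 : ℝ) := by
    filter_upwards [mgf_log_eventually, Ioi_mem_nhds (show (-1 : ℝ) < 0 by norm_num)] with t h1 h2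
    rw [Pi.mul_apply, h1]
    exact mul_inv_cancel₀ (Real.Gamma_pos_of_pos (by linarith [Set.mem_Ioi.mp h2])).ne'
  have key := iteratedDeriv_mul (n := n) hA.contDiffAt hB.contDiffAt
  rw [hone.iteratedDeriv_eq n, iteratedDeriv_const] at key
  rw [key]
  simp_rw [hM, hG]

end GenMertens

namespace GenMertens

open Filter Topology MeasureTheory Polynomial ProbabilityTheory

/-! ### The polynomials `P_k` -/

/-- The constant `c₁ - γ`, which is the constant term of `∑ₚ p^{-1-s} - log(1/s)` at `s = 0`. -/
noncomputable def shiftC : ℝ := mertensC1 - Real.eulerMascheroniConstant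

/-- The polynomial `P_k`, expanded in powers of `X + (c₁ - γ)`. -/
noncomputable def mertensPoly (k : ℕ) : ℝ[X] :=
  ∑ m ∈ range (k + 1), C ((k.choose m : ℝ) * invGammaDeriv m) * (X + C shiftC) ^ (k - m)

lemma invGammaDeriv_zero : invGammaDeriv 0 = 1 := by simp [invGammaDeriv]

lemma mertensPoly_zero : mertensPoly 0 = 1 := by simp [mertensPoly, invGammaDeriv_zero]

lemma derivative_mertensPoly (k : ℕ) :
    derivative (mertensPoly (k + 1)) = C ((k : ℝ) + 1) * mertensPoly k := by
  rw [mertensPoly, sum_range_succ, mertensPoly, mul_sum]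
  simp only [derivative_add, derivative_sum, derivative_C_mul, Nat.sub_self, pow_zero,
    derivative_one, mul_zero, add_zero]
  refine sum_congr rfl fun m hm => ?_
  have hm' : m ≤ k := Nat.lt_succ_iff.mp (mem_range.mp hm)
  have h := Nat.choose_mul_succ_eq k m
  have h2 : k + 1 - m = k - m + 1 := by omega
  rw [h2] at h ⊢
  rw [derivative_X_add_C_pow, ← mul_assoc, ← mul_assoc, Nat.add_sub_cancel, ← C_mul]
  congr 1
  rw [← C_mul]
  congr 1
  have h' : (k.choose m : ℝ) * (k + 1) = (k + 1).choose m * ((k - m + 1 : ℕ) : ℝ) := by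
    exact_mod_cast h
  linear_combination (-invGammaDeriv m) * h'

lemma coeff_mertensPoly (k j : ℕ) : (mertensPoly k).coeff j = ∑ m ∈ range (k + 1),
    (k.choose m : ℝ) * invGammaDeriv m * (shiftC ^ (k - m - j) * (k - m).choose j) := by
  rw [mertensPoly, finsetSum_coeff]
  refine sum_congr rfl fun m _ => ?_
  rw [coeff_C_mul, coeff_X_add_C_pow]

lemma coeff_mertensPoly_eq_zero {k j : ℕ} (h : k < j) : (mertensPoly k).coeff j = 0 := by
  rw [coeff_mertensPoly]
  refine sum_eq_zero fun m _ => ?_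
  rw [Nat.choose_eq_zero_of_lt (by omega : k - m < j)]
  simp

lemma coeff_mertensPoly_self (k : ℕ) : (mertensPoly k).coeff k = 1 := by
  rw [coeff_mertensPoly, sum_range_succ', sum_eq_zero]
  · simp [invGammaDeriv_zero]
  · intro m hm
    have := mem_range.mp hm
    rw [Nat.choose_eq_zero_of_lt (by omega : k - (m + 1) < k)]
    simp

lemma natDegree_mertensPoly (k : ℕ) : (mertensPoly k).natDegree ≤ k :=
  natDegree_le_iff_coeff_eq_zero.mpr fun _ h => coeff_mertensPoly_eq_zero h

lemma degree_mertensPoly (k : ℕ) : (mertensPoly k).degree = k := by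
  refine le_antisymm (degree_le_of_natDegree_le (natDegree_mertensPoly k)) ?_
  refine le_degree_of_ne_zero ?_
  rw [coeff_mertensPoly_self]
  exact one_ne_zero

lemma coeff_mertensPoly_eq_lambda {k j : ℕ} (h : j ≤ k) :
    (mertensPoly k).coeff j = mertensLambda j k := by
  rw [coeff_mertensPoly, mertensLambda]
  symm
  refine sum_subset_zero_on_sdiff (range_subset_range.mpr (by omega)) ?_ ?_
  · intro m hm
    simp only [Finset.mem_sdiff, Finset.mem_range] at hm
    rw [Nat.choose_eq_zero_of_lt (by omega : k - m < j)]
    simp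
  · intro m hm
    have hm' := mem_range.mp hm
    rw [Nat.cast_choose ℝ (by omega : m ≤ k), Nat.cast_choose ℝ (by omega : j ≤ k - m)]
    have := Nat.factorial_ne_zero (k - m)
    rw [shiftC, invGammaDeriv]
    field_simp

/-- The exponential generating series of `P_k(y)` is `(1/Γ)(1 + T) e^{(y + c₁ - γ) T}`. -/
lemma eval_mertensPoly (k : ℕ) (y : ℝ) : (mertensPoly k).eval y = k.factorial *
    PowerSeries.coeff k (PowerSeries.mk (fun m => invGammaDeriv m / m.factorial) *
      PowerSeries.rescale (y + shiftC) (PowerSeries.exp ℝ)) := by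
  rw [PowerSeries.coeff_mul, Finset.Nat.sum_antidiagonal_eq_sum_range_succ_mk, mul_sum, mertensPoly,
    eval_finsetSum]
  refine sum_congr rfl fun m hm => ?_
  rw [Nat.cast_choose ℝ (Nat.lt_succ_iff.mp (mem_range.mp hm))]
  simp [PowerSeries.coeff_rescale, PowerSeries.coeff_exp]
  field_simp

lemma mk_invGamma_mul_mk_logMoment :
    (PowerSeries.mk (fun m => invGammaDeriv m / m.factorial) *
      PowerSeries.mk (fun m => logMoment m / m.factorial) : PowerSeries ℝ) = 1 := by
  ext n
  rw [mul_comm, PowerSeries.coeff_mul, Finset.Nat.sum_antidiagonal_eq_sum_range_succ_mk,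
    PowerSeries.coeff_one]
  have h := sum_choose_logMoment n
  have hn : (n.factorial : ℝ) ≠ 0 := by exact_mod_cast n.factorial_ne_zero
  have h2 : ∑ i ∈ range (n + 1), (n.choose i : ℝ) * logMoment i * invGammaDeriv (n - i) =
      n.factorial * ∑ i ∈ range (n + 1),
        (logMoment i / i.factorial) * (invGammaDeriv (n - i) / (n - i).factorial) := by
    rw [mul_sum]
    refine sum_congr rfl fun i hi => ?_
    rw [Nat.cast_choose ℝ (Nat.lt_succ_iff.mp (mem_range.mp hi))]
    field_simp
  rw [h2] at h
  simp only [PowerSeries.coeff_mk]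
  rcases eq_or_ne n 0 with rfl | hn0
  · simpa using h
  · rw [if_neg hn0] at h ⊢
    exact (mul_eq_zero.mp h).resolve_left hn

/-- Averaging `P_k(y + log v)` against `e^{-v} dv` undoes the factor `1/Γ`. -/
lemma integral_eval_mertensPoly (k : ℕ) (y : ℝ) :
    ∫ v, (mertensPoly k).eval (y + Real.log v) ∂expDist = (y + shiftC) ^ k := by
  set A : PowerSeries ℝ := PowerSeries.mk (fun m => invGammaDeriv m / m.factorial)
  set E := PowerSeries.rescale (y + shiftC) (PowerSeries.exp ℝ)
  have h1 : ∀ v : ℝ, (mertensPoly k).eval (y + Real.log v) = k.factorial *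
      ∑ i ∈ range (k + 1), PowerSeries.coeff i (A * E) *
        ((1 / (k - i).factorial) * Real.log v ^ (k - i)) := by
    intro v
    rw [eval_mertensPoly, show y + Real.log v + shiftC = (y + shiftC) + Real.log v by ring,
      ← PowerSeries.exp_mul_exp_eq_exp_add, ← mul_assoc, PowerSeries.coeff_mul,
      Finset.Nat.sum_antidiagonal_eq_sum_range_succ_mk]
    congr 1
    refine sum_congr rfl fun i _ => ?_
    rw [PowerSeries.coeff_rescale, PowerSeries.coeff_exp]
    simp only [map_div₀, map_one, map_natCast]
    ring
  simp_rw [h1]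
  rw [integral_const_mul, integral_finsetSum]
  · have h2 : ∀ i, ∫ v, PowerSeries.coeff i (A * E) *
        ((1 / (k - i).factorial) * Real.log v ^ (k - i)) ∂expDist =
        PowerSeries.coeff i (A * E) * PowerSeries.coeff (k - i)
          (PowerSeries.mk (fun m => logMoment m / m.factorial)) := by
      intro i
      rw [integral_const_mul, integral_const_mul, PowerSeries.coeff_mk, logMoment]
      ring
    simp_rw [h2]
    have h3 := PowerSeries.coeff_mul k (A * E)
      (PowerSeries.mk (fun m => logMoment m / m.factorial))
    rw [Finset.Nat.sum_antidiagonal_eq_sum_range_succ_mk] at h3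
    rw [← h3, mul_right_comm, mk_invGamma_mul_mk_logMoment, one_mul, PowerSeries.coeff_rescale,
      PowerSeries.coeff_exp]
    have hn : (k.factorial : ℝ) ≠ 0 := by exact_mod_cast k.factorial_ne_zero
    simp
    field_simp
  · intro i _
    exact ((integrable_log_pow _).const_mul _).const_mul _

end GenMertens

namespace GenMertens

open Filter Topology MeasureTheory ProbabilityTheory

/-! ### Dirichlet series and an exponential average of the summatory function -/

/-- `recipPrime` with complex values. -/
noncomputable def recipPrimeC : ArithmeticFunction ℂ :=
  ⟨fun n => (recipPrime n : ℂ), by simp⟩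

lemma recipPrimeC_pow_apply (k n : ℕ) : (recipPrimeC ^ k) n = ((recipPrime ^ k) n : ℂ) := by
  induction k generalizing n with
  | zero =>
    rw [pow_zero, pow_zero, ArithmeticFunction.one_apply, ArithmeticFunction.one_apply]
    split_ifs <;> simp
  | succ k ih =>
    rw [pow_succ, pow_succ, ArithmeticFunction.mul_apply, ArithmeticFunction.mul_apply]
    push_cast
    exact sum_congr rfl fun d _ => by rw [ih]; rfl

lemma recipPrimeC_term (k n : ℕ) (s : ℝ) :
    LSeries.term (fun n => (recipPrimeC ^ k) n) (s : ℂ) n =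
      (((recipPrime ^ k) n * (n : ℝ) ^ (-s) : ℝ) : ℂ) := by
  rw [LSeries.term_def₀ (by simp), recipPrimeC_pow_apply]
  push_cast
  rw [Complex.ofReal_cpow (Nat.cast_nonneg n)]
  push_cast
  rfl

lemma summable_recipPrime_rpow {s : ℝ} (hs : 0 < s) :
    Summable fun n : ℕ => recipPrime n * (n : ℝ) ^ (-s) := by
  refine Summable.of_nonneg_of_le (fun n => mul_nonneg (recipPrime_nonneg n) (by positivity))
    (fun n => ?_) (Real.summable_nat_rpow.mpr (by linarith : -(1 + s) < -1))
  rw [recipPrime_apply]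
  split_ifs with h
  · have : (0 : ℝ) < n := by exact_mod_cast h.pos
    rw [neg_add, Real.rpow_add this, Real.rpow_neg_one, one_div]
  · rw [zero_mul]; positivity

lemma LSeries_recipPrimeC_pow (k : ℕ) {s : ℝ} (hs : 0 < s) :
    LSeriesSummable (fun n => (recipPrimeC ^ k) n) (s : ℂ) ∧
    LSeries (fun n => (recipPrimeC ^ k) n) (s : ℂ) =
      LSeries (fun n => (recipPrimeC ^ 1) n) (s : ℂ) ^ k := by
  have h1 : LSeriesSummable (fun n => (recipPrimeC ^ 1) n) (s : ℂ) := by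
    rw [LSeriesSummable]
    simp_rw [funext fun n => recipPrimeC_term 1 n s, pow_one]
    exact_mod_cast summable_recipPrime_rpow hs
  induction k with
  | zero =>
    simp only [pow_zero, ArithmeticFunction.one_eq_delta]
    refine ⟨?_, by rw [LSeries_delta]; rfl⟩
    change Summable fun n => LSeries.term LSeries.delta (s : ℂ) n
    simp_rw [LSeries.term_delta]
    exact summable_of_hasFiniteSupport ((Set.finite_singleton 1).subset fun n hn => by
      by_contra h; simp_all)
  | succ k ih =>
    have h2 : recipPrimeC ^ (k + 1) = recipPrimeC ^ k * recipPrimeC ^ 1 := by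
      rw [pow_one, pow_succ]
    rw [h2]
    refine ⟨ArithmeticFunction.LSeriesSummable_mul ih.1 h1, ?_⟩
    rw [ArithmeticFunction.LSeries_mul' ih.1 h1, ih.2]
    exact (pow_succ _ _).symm

lemma summable_recipPrime_pow_rpow (k : ℕ) {s : ℝ} (hs : 0 < s) :
    Summable fun n : ℕ => (recipPrime ^ k) n * (n : ℝ) ^ (-s) := by
  have h := (LSeries_recipPrimeC_pow k hs).1
  rw [LSeriesSummable] at h
  simp_rw [funext fun n => recipPrimeC_term k n s] at h
  exact Complex.summable_ofReal.mp h

lemma tsum_recipPrime_pow_rpow (k : ℕ) {s : ℝ} (hs : 0 < s) :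
    ∑' n : ℕ, (recipPrime ^ k) n * (n : ℝ) ^ (-s) =
      (∑' n : ℕ, recipPrime n * (n : ℝ) ^ (-s)) ^ k := by
  have h := (LSeries_recipPrimeC_pow k hs).2
  simp_rw [LSeries, recipPrimeC_term, pow_one] at h
  rw [← Complex.ofReal_tsum, ← Complex.ofReal_tsum] at h
  exact_mod_cast h

lemma integral_exp_tail {b : ℝ} (hb : 0 ≤ b) (c : ℝ) :
    ∫ v, (Set.Ioi b).indicator (fun _ => c) v ∂expDist = c * Real.exp (-b) := by
  rw [integral_expDist]
  have h : ∀ v : ℝ, Real.exp (-v) * (Set.Ioi b).indicator (fun _ => c) v =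
      (Set.Ioi b).indicator (fun v => Real.exp (-v) * c) v := by
    intro v; by_cases hv : v ∈ Set.Ioi b <;> simp [hv]
  simp_rw [h]
  rw [setIntegral_indicator measurableSet_Ioi, Set.Ioi_inter_Ioi, max_eq_right hb,
    integral_mul_const, integral_exp_neg_Ioi, mul_comm]

/-- `∑ f(n) n^{-s}` is the mean of `∑_{n ≤ e^{V/s}} f(n)` over an exponential variable `V`,
because `n^{-s}` is the probability of `V > s log n`. -/
lemma tsum_rpow_eq_integral_summ (f : ArithmeticFunction ℝ) (hf : ∀ n, 0 ≤ f n) {s : ℝ}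
    (hs : 0 < s) (hsum : Summable fun n : ℕ => f n * (n : ℝ) ^ (-s)) :
    ∑' n : ℕ, f n * (n : ℝ) ^ (-s) = ∫ v, summ f (Real.exp (v / s)) ∂expDist := by
  have hexp : ∀ n : ℕ, f n * Real.exp (-(s * Real.log n)) = f n * (n : ℝ) ^ (-s) := by
    intro n
    rcases Nat.eq_zero_or_pos n with rfl | hn
    · simp
    · rw [Real.rpow_def_of_pos (by exact_mod_cast hn), mul_neg, mul_comm s]
  have hlog : ∀ n : ℕ, 0 ≤ s * Real.log n := fun n =>
    mul_nonneg hs.le (Real.log_natCast_nonneg n)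
  have hF := hasSum_integral_of_summable_integral_norm (μ := expDist)
    (F := fun (n : ℕ) v => (Set.Ioi (s * Real.log n)).indicator (fun _ => f n) v)
    (fun n => (integrable_const _).indicator measurableSet_Ioi) ?_
  · simp_rw [integral_exp_tail (hlog _), hexp] at hF
    rw [hF.tsum_eq]
    have hnull : ∀ᵐ v ∂expDist, ∀ n : ℕ, v ≠ s * Real.log n := by
      rw [ae_all_iff]
      intro n
      have h1 : expDist ≪ volume :=
        (withDensity_absolutelyContinuous _ _).trans Measure.restrict_le_self.absolutelyContinuous
      exact h1.ae_le (Measure.ae_ne volume _)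
    refine integral_congr_ae ?_
    filter_upwards [hnull] with v hv
    rw [summ, tsum_eq_sum (s := Ioc 0 ⌊Real.exp (v / s)⌋₊)]
    · refine sum_congr rfl fun n hn => ?_
      obtain ⟨h1, h2⟩ := Finset.mem_Ioc.mp hn
      have h3 : (n : ℝ) ≤ Real.exp (v / s) := (Nat.le_floor_iff (Real.exp_pos _).le).mp h2
      have h4 : Real.log n ≤ v / s := by
        rw [← Real.log_exp (v / s)]
        exact Real.log_le_log (by exact_mod_cast h1) h3
      rw [le_div_iff₀ hs, mul_comm] at h4
      rw [Set.indicator_of_mem]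
      exact lt_of_le_of_ne h4 (hv n).symm
    · intro n hn
      rcases Nat.eq_zero_or_pos n with rfl | hn0
      · simp
      rw [Set.indicator_of_notMem]
      intro h4
      apply hn
      rw [Finset.mem_Ioc, Nat.le_floor_iff (Real.exp_pos _).le]
      refine ⟨hn0, ?_⟩
      rw [← Real.log_le_iff_le_exp (by exact_mod_cast hn0), le_div_iff₀ hs, mul_comm]
      exact (Set.mem_Ioi.mp h4).le
  · refine hsum.congr fun n => ?_
    rw [← hexp, ← integral_exp_tail (hlog n)]
    refine integral_congr_ae (Eventually.of_forall fun v => ?_)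
    exact (Real.norm_of_nonneg (Set.indicator_nonneg (fun _ _ => hf n) v)).symm

end GenMertens

namespace GenMertens

open Filter Topology MeasureTheory ProbabilityTheory Polynomial

/-! ### The Abelian argument -/

lemma summ_mono {f : ArithmeticFunction ℝ} (hf : ∀ n, 0 ≤ f n) : Monotone (summ f) :=
  fun _ _ hxy => sum_le_sum_of_subset_of_nonneg
    (Ioc_subset_Ioc_right (Nat.floor_le_floor hxy)) fun n _ _ => hf n

lemma poly_abs_bound (p : ℝ[X]) :
    ∃ c : ℝ, 0 ≤ c ∧ ∀ y : ℝ, |p.eval y| ≤ c * (1 + |y|) ^ p.natDegree := by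
  refine ⟨∑ i ∈ range (p.natDegree + 1), |p.coeff i|, sum_nonneg fun _ _ => abs_nonneg _,
    fun y => ?_⟩
  rw [Polynomial.eval_eq_sum_range, sum_mul]
  refine (abs_sum_le_sum_abs _ _).trans (sum_le_sum fun i hi => ?_)
  rw [abs_mul, abs_pow]
  refine mul_le_mul_of_nonneg_left ?_ (abs_nonneg _)
  calc |y| ^ i ≤ (1 + |y|) ^ i := pow_le_pow_left₀ (abs_nonneg _) (by linarith) i
    _ ≤ _ := pow_le_pow_right₀ (by linarith [abs_nonneg y]) (Nat.lt_succ_iff.mp (mem_range.mp hi))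

lemma integrable_add_abs_log_pow (c : ℝ) (n : ℕ) :
    Integrable (fun v => (c + |Real.log v|) ^ n) expDist := by
  simp_rw [add_pow]
  refine integrable_finsetSum _ fun i _ => ?_
  exact ((integrable_abs_log_pow _).const_mul _).mul_const _

/-- If `∑_{n ≤ x} f(n) - Q(log log x)` tends to `d` as `x → ∞`, then so does the difference of the
exponential averages of the two terms, as the scale `1 / s` tends to infinity. -/
lemma abel (f : ArithmeticFunction ℝ) (hf : ∀ n, 0 ≤ f n) (Q : ℝ[X]) (d : ℝ)
    (h : Tendsto (fun x : ℝ => summ f x - Q.eval (Real.log (Real.log x))) atTop (𝓝 d))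
    (hsum : ∀ s : ℝ, 0 < s → Summable fun n : ℕ => f n * (n : ℝ) ^ (-s)) :
    Tendsto (fun s : ℝ => ∑' n : ℕ, f n * (n : ℝ) ^ (-s) -
      ∫ v, Q.eval (-Real.log s + Real.log v) ∂expDist) (𝓝[>] 0) (𝓝 d) := by
  set F : ℝ → ℝ := fun u => summ f (Real.exp u) - Q.eval (Real.log u) with hFdef
  have hF : Tendsto F atTop (𝓝 d) := by
    refine (h.comp Real.tendsto_exp_atTop).congr fun u => ?_
    simp [hFdef]
  obtain ⟨U, hU1, hU⟩ : ∃ U : ℝ, 1 ≤ U ∧ ∀ u, U ≤ u → |F u| ≤ |d| + 1 := by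
    have h1 := hF.abs.eventually_lt_const (lt_add_one |d|)
    obtain ⟨U, hU⟩ := eventually_atTop.mp h1
    exact ⟨max U 1, le_max_right _ _, fun u hu => (hU u ((le_max_left _ _).trans hu)).le⟩
  obtain ⟨c, hc, hQ⟩ := poly_abs_bound Q
  have hsnn : ∀ x, 0 ≤ summ f x := fun x => sum_nonneg fun n _ => hf n
  -- For `v / s ≤ U` the inequalities `log v ≤ log (v / s) ≤ log U` control the polynomial.
  set G : ℝ → ℝ := fun v => (|d| + 1 + summ f (Real.exp U)) +
    c * ((1 + Real.log U) + |Real.log v|) ^ Q.natDegree with hG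
  have hlogU : 0 ≤ Real.log U := Real.log_nonneg hU1
  have hbound : ∀ s : ℝ, 0 < s → s ≤ 1 → ∀ v : ℝ, 0 < v → |F (v / s)| ≤ G v := by
    intro s hs hs1 v hv
    have hpow : 0 ≤ c * ((1 + Real.log U) + |Real.log v|) ^ Q.natDegree := by positivity
    rcases le_total U (v / s) with hu | hu
    · have := hU _ hu
      have h2 := hsnn (Real.exp U)
      simp only [hG]; linarith
    · have h1 : summ f (Real.exp (v / s)) ≤ summ f (Real.exp U) :=
        summ_mono hf (Real.exp_le_exp.mpr hu)
      have hpos : 0 < v / s := by positivity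
      have h2 : |Real.log (v / s)| ≤ Real.log U + |Real.log v| := by
        have a1 : Real.log (v / s) ≤ Real.log U := Real.log_le_log hpos hu
        have a2 : Real.log v ≤ Real.log (v / s) :=
          Real.log_le_log hv (by rw [le_div_iff₀ hs]; nlinarith)
        have a3 := neg_abs_le (Real.log v)
        have a4 := abs_nonneg (Real.log v)
        exact abs_le.mpr ⟨by linarith, by linarith⟩
      have h3 : |Q.eval (Real.log (v / s))| ≤
          c * ((1 + Real.log U) + |Real.log v|) ^ Q.natDegree := by
        refine (hQ _).trans (mul_le_mul_of_nonneg_left (pow_le_pow_left₀ ?_ ?_ _) hc)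
        · positivity
        · linarith
      have h4 : |F (v / s)| ≤ |summ f (Real.exp (v / s))| + |Q.eval (Real.log (v / s))| :=
        abs_sub _ _
      rw [abs_of_nonneg (hsnn _)] at h4
      have h5 := abs_nonneg d
      simp only [hG]; linarith
  have hGint : Integrable G expDist :=
    (integrable_const _).add ((integrable_add_abs_log_pow _ _).const_mul _)
  have hFmeas : ∀ s : ℝ, Measurable fun v => F (v / s) := by
    intro s
    have h1 : Measurable (summ f) := (summ_mono hf).measurable
    have h2 : Measurable fun y => Q.eval y := Q.continuous.measurable
    have h3 : Measurable F :=
      (h1.comp Real.measurable_exp).sub (h2.comp Real.measurable_log)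
    exact h3.comp (measurable_id.div_const s)
  have hmem : ∀ᶠ s : ℝ in 𝓝[>] 0, 0 < s ∧ s ≤ 1 := by
    filter_upwards [Ioc_mem_nhdsGT (zero_lt_one' ℝ)] with s hs using hs
  have hDCT : Tendsto (fun s : ℝ => ∫ v, F (v / s) ∂expDist) (𝓝[>] 0) (𝓝 (∫ _, d ∂expDist)) := by
    refine tendsto_integral_filter_of_dominated_convergence G ?_ ?_ hGint ?_
    · exact Eventually.of_forall fun s => (hFmeas s).aestronglyMeasurable
    · filter_upwards [hmem] with s hs
      filter_upwards [ae_expDist_pos] with v hv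
      exact hbound s hs.1 hs.2 v hv
    · filter_upwards [ae_expDist_pos] with v hv
      have hdiv : Tendsto (fun s : ℝ => v / s) (𝓝[>] 0) atTop := by
        simp_rw [div_eq_mul_inv]
        exact tendsto_inv_nhdsGT_zero.const_mul_atTop hv
      exact hF.comp hdiv
  rw [integral_const, probReal_univ, one_smul] at hDCT
  refine hDCT.congr' ?_
  filter_upwards [hmem] with s hs
  rw [tsum_rpow_eq_integral_summ f hf hs.1 (hsum s hs.1)]
  have hlog : ∀ᵐ v ∂expDist, Q.eval (Real.log (v / s)) = Q.eval (-Real.log s + Real.log v) := by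
    filter_upwards [ae_expDist_pos] with v hv
    rw [Real.log_div hv.ne' hs.1.ne']
    congr 1; ring
  rw [← integral_congr_ae hlog]
  have hFi : Integrable (fun v => F (v / s)) expDist := by
    refine hGint.mono' (hFmeas s).aestronglyMeasurable ?_
    filter_upwards [ae_expDist_pos] with v hv
    exact hbound s hs.1 hs.2 v hv
  have hQi : Integrable (fun v => Q.eval (Real.log (v / s))) expDist := by
    refine ((integrable_add_abs_log_pow (1 + |Real.log s|) Q.natDegree).const_mul c).mono'
      (Q.continuous.measurable.comp
        (Real.measurable_log.comp (measurable_id.div_const s))).aestronglyMeasurable ?_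
    filter_upwards [ae_expDist_pos] with v hv
    refine (hQ _).trans (mul_le_mul_of_nonneg_left (pow_le_pow_left₀ (by positivity) ?_ _) hc)
    rw [Real.log_div hv.ne' hs.1.ne']
    have := abs_sub (Real.log v) (Real.log s)
    linarith
  have hSi : Integrable (fun v => summ f (Real.exp (v / s))) expDist := by
    refine (hFi.add hQi).congr (Eventually.of_forall fun v => ?_)
    simp [hFdef]
  exact integral_sub hSi hQi

end GenMertens

namespace GenMertens

open Filter Topology MeasureTheory ProbabilityTheory

/-! ### The prime zeta function near `1` -/

/-- `φ(y) = log (1 / (1 - y)) - y`. -/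
noncomputable def logTail (y : ℝ) : ℝ := -Real.log (1 - y) - y

lemma logTail_sub {y y' : ℝ} (h0 : 0 ≤ y') (h1 : y' ≤ y) (h2 : y ≤ 1 / 2) :
    0 ≤ logTail y - logTail y' ∧ logTail y - logTail y' ≤ 2 * y * (y - y') := by
  have p1 : 0 < 1 - y := by linarith
  have p2 : 0 < 1 - y' := by linarith
  have e : logTail y - logTail y' = Real.log ((1 - y') / (1 - y)) - (y - y') := by
    rw [Real.log_div p2.ne' p1.ne', logTail, logTail]; ring
  rw [e]
  constructor
  · have h := Real.one_sub_inv_le_log_of_pos (div_pos p2 p1)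
    have h3 : 1 - ((1 - y') / (1 - y))⁻¹ = (y - y') / (1 - y') := by field_simp; ring
    have h4 : y - y' ≤ (y - y') / (1 - y') := by
      rw [le_div_iff₀ p2]; nlinarith
    linarith
  · have h := Real.log_le_sub_one_of_pos (div_pos p2 p1)
    have h3 : (1 - y') / (1 - y) - 1 - (y - y') = (y - y') * (y / (1 - y)) := by field_simp; ring
    have h4 : y / (1 - y) ≤ 2 * y := by
      rw [div_le_iff₀ p1]; nlinarith
    have h5 := mul_le_mul_of_nonneg_left h4 (sub_nonneg.mpr h1)
    linarith

lemma logTail_zero : logTail 0 = 0 := by simp [logTail]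

lemma logTail_bound {y : ℝ} (h0 : 0 ≤ y) (h2 : y ≤ 1 / 2) :
    0 ≤ logTail y ∧ logTail y ≤ 2 * y ^ 2 := by
  have h := logTail_sub le_rfl h0 h2
  rw [logTail_zero] at h
  constructor
  · linarith [h.1]
  · nlinarith [h.2]

lemma prime_two_le (p : Nat.Primes) : (2 : ℝ) ≤ p := by exact_mod_cast p.2.two_le

lemma prime_rpow_le {s : ℝ} (hs : 0 ≤ s) (p : Nat.Primes) :
    0 < (p : ℝ) ^ (-(1 + s)) ∧ (p : ℝ) ^ (-(1 + s)) ≤ 1 / p ∧ 1 / (p : ℝ) ≤ 1 / 2 := by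
  have h := prime_two_le p
  refine ⟨by positivity, ?_, one_div_le_one_div_of_le (by norm_num) h⟩
  rw [one_div, ← Real.rpow_neg_one]
  exact Real.rpow_le_rpow_of_exponent_le (by linarith) (by linarith)

lemma summable_primes {r : ℝ} (hr : r < -1) : Summable fun p : Nat.Primes => (p : ℝ) ^ r :=
  Nat.Primes.summable_rpow.mpr hr

lemma summable_logTail {s : ℝ} (hs : 0 ≤ s) :
    Summable fun p : Nat.Primes => logTail ((p : ℝ) ^ (-(1 + s))) := by
  have hb : ∀ p : Nat.Primes, _ := fun p => logTail_bound (prime_rpow_le hs p).1.le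
    ((prime_rpow_le hs p).2.1.trans (prime_rpow_le hs p).2.2)
  refine Summable.of_nonneg_of_le (fun p => (hb p).1) (fun p => ?_)
    ((summable_primes (by norm_num : (-2 : ℝ) < -1)).mul_left 2)
  refine (hb p).2.trans (mul_le_mul_of_nonneg_left ?_ zero_le_two)
  have h2 := prime_two_le p
  calc ((p : ℝ) ^ (-(1 + s))) ^ 2 ≤ (1 / (p : ℝ)) ^ 2 :=
        pow_le_pow_left₀ (prime_rpow_le hs p).1.le (prime_rpow_le hs p).2.1 2
    _ = (p : ℝ) ^ (-2 : ℝ) := by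
        rw [Real.rpow_neg (by linarith), one_div, inv_pow]; norm_num

lemma shiftC_eq : shiftC = -∑' p : Nat.Primes, logTail ((p : ℝ) ^ (-(1 + 0 : ℝ))) := by
  rw [shiftC, mertensC1, sub_sub_cancel_left]
  congr 1
  refine tsum_congr fun p => ?_
  rw [add_zero, Real.rpow_neg_one, logTail, one_div, Real.log_inv, one_div]

lemma zeta_eq_exp {s : ℝ} (hs : 0 < s) :
    ((Real.exp (∑' p : Nat.Primes, -Real.log (1 - (p : ℝ) ^ (-(1 + s)))) : ℝ) : ℂ) =
      riemannZeta (1 + s) := by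
  rw [← riemannZeta_eulerProduct_exp_log (s := 1 + s) (by simpa using hs)]
  push_cast
  congr 1
  refine tsum_congr fun p => ?_
  have h := prime_rpow_le hs.le p
  rw [Complex.ofReal_log (by linarith), Complex.ofReal_sub,
    Complex.ofReal_cpow (by linarith [prime_two_le p])]
  push_cast
  rfl

lemma abs_log_one_add_le {x : ℝ} (hx : |x| ≤ 1 / 2) : |Real.log (1 + x)| ≤ 2 * |x| := by
  obtain ⟨h1, h2⟩ := abs_le.mp hx
  have p : 0 < 1 + x := by linarith
  have a := Real.log_le_sub_one_of_pos p
  have b := Real.one_sub_inv_le_log_of_pos p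
  have e : 1 - (1 + x)⁻¹ = x / (1 + x) := by field_simp; ring
  have c : -(2 * |x|) ≤ x / (1 + x) := by
    rw [le_div_iff₀ p]
    rcases abs_cases x with ⟨h, _⟩ | ⟨h, _⟩ <;> rw [h] <;> nlinarith
  rw [e] at b
  have := le_abs_self x
  have := abs_nonneg x
  exact abs_le.mpr ⟨by linarith, by linarith⟩

/-- The simple pole of `ζ` at `1`, on the logarithmic scale: `log ζ(1 + s) = log(1/s) + O(s)`. -/
lemma log_zeta_asymp : ∃ c : ℝ, 0 ≤ c ∧ ∀ᶠ s : ℝ in 𝓝[>] 0,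
    |(∑' p : Nat.Primes, -Real.log (1 - (p : ℝ) ^ (-(1 + s)))) + Real.log s| ≤ c * s := by
  have h1 : Tendsto (fun s : ℝ => (1 : ℂ) + s) (𝓝[>] 0) (𝓝[≠] 1) := by
    refine tendsto_nhdsWithin_iff.mpr ⟨?_, ?_⟩
    · have : Continuous fun s : ℝ => (1 : ℂ) + s := by fun_prop
      simpa using (this.tendsto 0).mono_left nhdsWithin_le_nhds
    · filter_upwards [self_mem_nhdsWithin] with s hs
      simpa using (Set.mem_Ioi.mp hs).ne'
  have h2 := (tendsto_riemannZeta_sub_one_div.comp h1).norm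
  set M : ℝ := ‖(Real.eulerMascheroniConstant : ℂ)‖ + 1 with hM
  have hM0 : 0 < M := by positivity
  refine ⟨2 * M, by positivity, ?_⟩
  filter_upwards [h2.eventually_lt_const (lt_add_one _), self_mem_nhdsWithin,
    Ioc_mem_nhdsGT (show (0 : ℝ) < 1 / (2 * M) by positivity)] with s hs1 hs hs2
  have hs0 : 0 < s := hs
  set T := ∑' p : Nat.Primes, -Real.log (1 - (p : ℝ) ^ (-(1 + s))) with hT
  simp only [Function.comp] at hs1
  rw [← zeta_eq_exp hs0, ← hT, add_sub_cancel_left] at hs1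
  have h3 : ‖((Real.exp T - 1 / s : ℝ) : ℂ)‖ < M := by
    rw [Complex.ofReal_sub, Complex.ofReal_div, Complex.ofReal_one]
    exact hs1
  rw [Complex.norm_real, Real.norm_eq_abs] at h3
  have h4 : Real.exp (T + Real.log s) = 1 + s * (Real.exp T - 1 / s) := by
    rw [Real.exp_add, Real.exp_log hs0]; field_simp; ring
  have h5 : |s * (Real.exp T - 1 / s)| ≤ s * M := by
    rw [abs_mul, abs_of_pos hs0]; gcongr
  have h6 : s * M ≤ 1 / 2 := by
    have := hs2.2
    rw [le_div_iff₀ (by positivity)] at this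
    linarith
  rw [← Real.log_exp (T + Real.log s), h4]
  calc _ ≤ 2 * |s * (Real.exp T - 1 / s)| := abs_log_one_add_le (h5.trans h6)
    _ ≤ 2 * (s * M) := by gcongr
    _ = _ := by ring

lemma summable_log_div_sq : Summable fun p : Nat.Primes => 2 * (Real.log p * ((p : ℝ) ^ (-2 : ℝ))) := by
  refine Summable.mul_left 2 ?_
  refine Summable.of_nonneg_of_le (fun p => ?_) (fun p => ?_)
    ((summable_primes (by norm_num : (-3 / 2 : ℝ) < -1)).mul_left 2)
  · have := prime_two_le p
    have := Real.log_nonneg (by linarith : (1 : ℝ) ≤ p)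
    positivity
  · have h0 : (0 : ℝ) < p := by linarith [prime_two_le p]
    have h := Real.log_le_rpow_div h0.le (show (0 : ℝ) < 1 / 2 by norm_num)
    calc Real.log p * (p : ℝ) ^ (-2 : ℝ) ≤ (p : ℝ) ^ (1 / 2 : ℝ) / (1 / 2) * (p : ℝ) ^ (-2 : ℝ) := by
          gcongr
      _ = 2 * ((p : ℝ) ^ (1 / 2 : ℝ) * (p : ℝ) ^ (-2 : ℝ)) := by ring
      _ = 2 * (p : ℝ) ^ (-3 / 2 : ℝ) := by rw [← Real.rpow_add h0]; norm_num

/-- `∑ₚ p^{-1-s} = log(1/s) + (c₁ - γ) + O(s)` as `s → 0+`. -/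
lemma prime_zeta_asymp : ∃ c : ℝ, 0 ≤ c ∧ ∀ᶠ s : ℝ in 𝓝[>] 0,
    |∑' n : ℕ, recipPrime n * (n : ℝ) ^ (-s) - (-Real.log s + shiftC)| ≤ c * s := by
  obtain ⟨c, hc, h⟩ := log_zeta_asymp
  refine ⟨c + ∑' p : Nat.Primes, 2 * (Real.log p * ((p : ℝ) ^ (-2 : ℝ))),
    add_nonneg hc (tsum_nonneg fun p => ?_), ?_⟩
  · have := prime_two_le p
    have := Real.log_nonneg (by linarith : (1 : ℝ) ≤ p)
    positivity
  filter_upwards [h, self_mem_nhdsWithin] with s hs hs0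
  replace hs0 : 0 < s := hs0
  have e1 : ∑' n : ℕ, recipPrime n * (n : ℝ) ^ (-s) =
      ∑' p : Nat.Primes, (p : ℝ) ^ (-(1 + s)) := by
    rw [← tsum_primes_eq fun n => (n : ℝ) ^ (-s)]
    refine tsum_congr fun p => ?_
    rw [neg_add, Real.rpow_add (by linarith [prime_two_le p]), Real.rpow_neg_one, one_div]
  have e2 : ∑' p : Nat.Primes, -Real.log (1 - (p : ℝ) ^ (-(1 + s))) =
      ∑' p : Nat.Primes, logTail ((p : ℝ) ^ (-(1 + s))) +
        ∑' p : Nat.Primes, (p : ℝ) ^ (-(1 + s)) := by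
    rw [← (summable_logTail hs0.le).tsum_add (summable_primes (by linarith))]
    exact tsum_congr fun p => by rw [logTail]; ring
  have hd : ∀ p : Nat.Primes,
      0 ≤ logTail ((p : ℝ) ^ (-(1 + 0 : ℝ))) - logTail ((p : ℝ) ^ (-(1 + s))) ∧
      logTail ((p : ℝ) ^ (-(1 + 0 : ℝ))) - logTail ((p : ℝ) ^ (-(1 + s))) ≤
        2 * (Real.log p * ((p : ℝ) ^ (-2 : ℝ))) * s := by
    intro p
    have h2 := prime_two_le p
    have h0 : (0 : ℝ) < p := by linarith
    obtain ⟨b1, b2, b3⟩ := prime_rpow_le hs0.le p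
    have e : (p : ℝ) ^ (-(1 + 0 : ℝ)) = 1 / p := by rw [add_zero, Real.rpow_neg_one, one_div]
    rw [e]
    have hk := logTail_sub b1.le b2 b3
    refine ⟨hk.1, hk.2.trans ?_⟩
    have b4 : 1 - s * Real.log p ≤ (p : ℝ) ^ (-s) := by
      rw [Real.rpow_def_of_pos h0]
      have := Real.add_one_le_exp (Real.log p * -s)
      linarith
    have b5 : (p : ℝ) ^ (-(1 + s)) = 1 / p * (p : ℝ) ^ (-s) := by
      rw [neg_add, Real.rpow_add h0, Real.rpow_neg_one, one_div]
    have b6 : (p : ℝ) ^ (-2 : ℝ) = (1 / p) * (1 / p) := by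
      rw [Real.rpow_neg h0.le]; norm_num; ring
    rw [b5, b6]
    have b7 : 0 ≤ 2 * (1 / (p : ℝ)) * (1 / p) := by positivity
    nlinarith [mul_le_mul_of_nonneg_left b4 b7]
  have hsum := (summable_logTail le_rfl).sub (summable_logTail hs0.le)
  have e3 := (summable_logTail le_rfl).tsum_sub (summable_logTail hs0.le)
  have hle := hsum.tsum_le_tsum (fun p => (hd p).2) (summable_log_div_sq.mul_right s)
  have hge : 0 ≤ ∑' p : Nat.Primes,
      (logTail ((p : ℝ) ^ (-(1 + 0 : ℝ))) - logTail ((p : ℝ) ^ (-(1 + s)))) :=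
    tsum_nonneg fun p => (hd p).1
  rw [tsum_mul_right] at hle
  rw [e3] at hle hge
  rw [e1, shiftC_eq]
  rw [e2] at hs
  obtain ⟨q1, q2⟩ := abs_le.mp hs
  rw [add_mul]
  refine abs_le.mpr ⟨by linarith, by linarith⟩

end GenMertens

namespace GenMertens

open Filter Topology MeasureTheory ProbabilityTheory

/-! ### Identification of the constant and conclusion -/

/-- The constant term of `P_k` is the right one: both exponential averages are
`(log(1/s) + c₁ - γ)^k + o(1)`. -/
lemma const_eq_zero (k : ℕ) (d : ℝ) (h : Tendsto (fun x : ℝ => summ (recipPrime ^ k) x -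
    (mertensPoly k).eval (Real.log (Real.log x))) atTop (𝓝 d)) : d = 0 := by
  have h1 := abel (recipPrime ^ k) (recipPrime_pow_nonneg k) (mertensPoly k) d h
    fun s hs => summable_recipPrime_pow_rpow k hs
  refine tendsto_nhds_unique h1 ?_
  obtain ⟨c, hc, hP⟩ := prime_zeta_asymp
  have hz : Tendsto (fun s : ℝ => c * k * ((Real.log s⁻¹ + (|shiftC| + c)) ^ (k - 1) / s⁻¹))
      (𝓝[>] 0) (𝓝 0) := by
    have := ((tendsto_log_add_pow_div (|shiftC| + c) (k - 1)).comp
      (tendsto_inv_nhdsGT_zero (𝕜 := ℝ))).const_mul (c * k)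
    rwa [mul_zero] at this
  refine squeeze_zero_norm' ?_ hz
  filter_upwards [hP, Ioc_mem_nhdsGT (zero_lt_one' ℝ)] with s hs hs1
  rw [tsum_recipPrime_pow_rpow k hs1.1, integral_eval_mertensPoly, Real.norm_eq_abs]
  refine (abs_pow_sub_pow_le _ _ _).trans ?_
  set A := ∑' n : ℕ, recipPrime n * (n : ℝ) ^ (-s)
  set B := -Real.log s + shiftC with hB
  have hlog : Real.log s ≤ 0 := Real.log_nonpos hs1.1.le hs1.2
  have hBabs : |B| ≤ Real.log s⁻¹ + |shiftC| := by
    rw [Real.log_inv, hB]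
    exact (abs_add_le _ _).trans (by rw [abs_of_nonneg (neg_nonneg.mpr hlog)])
  have hcs : c * s ≤ c := mul_le_of_le_one_right hc hs1.2
  have hAabs : |A| ≤ Real.log s⁻¹ + (|shiftC| + c) := by
    have := abs_sub_abs_le_abs_sub A B
    linarith
  have hmax : max |A| |B| ≤ Real.log s⁻¹ + (|shiftC| + c) := max_le hAabs (by linarith)
  rw [div_inv_eq_mul]
  have hs0 : 0 ≤ c * s * k := mul_nonneg (mul_nonneg hc hs1.1.le) (Nat.cast_nonneg k)
  calc |A - B| * k * max |A| |B| ^ (k - 1)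
      ≤ (c * s) * k * (Real.log s⁻¹ + (|shiftC| + c)) ^ (k - 1) := by gcongr
    _ = _ := by ring

/-- Away from the zero of `log log x` at `x = e`, the shift in `log log x + 2` is harmless. -/
lemma loglog_add_two_le : ∃ c : ℝ, 0 ≤ c ∧ ∀ x : ℝ, 3 ≤ x →
    Real.log (Real.log x) + 2 ≤ c * Real.log (Real.log x) := by
  have h3 : 1 < Real.log 3 := by
    rw [Real.lt_log_iff_exp_lt (by norm_num)]
    linarith [Real.exp_one_lt_d9]
  set l := Real.log (Real.log 3)
  have hl : 0 < l := Real.log_pos h3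
  refine ⟨1 + 2 / l, by positivity, fun x hx => ?_⟩
  have h : l ≤ Real.log (Real.log x) :=
    Real.log_le_log (by linarith) (Real.log_le_log (by norm_num) hx)
  have h2 : 2 ≤ 2 / l * Real.log (Real.log x) := by
    rw [div_mul_eq_mul_div, le_div_iff₀ hl]; linarith
  linarith

end GenMertens

open GenMertens in
theorem generalized_mertens (k : ℕ) (hk : 1 ≤ k) :
    ∃ P : Polynomial ℝ, P.degree = k ∧
      (∀ j ∈ Finset.range (k + 1), P.coeff j = mertensLambda j k) ∧
      (∀ j, k < j → P.coeff j = 0) ∧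
      ∃ C : ℝ, ∀ x : ℝ, 3 ≤ x →
        |mertensS k x - P.eval (Real.log (Real.log x))| ≤
          C * (Real.log (Real.log x)) ^ (k - 1) / Real.log x := by
  refine ⟨mertensPoly k, degree_mertensPoly k,
    fun j hj => coeff_mertensPoly_eq_lambda (Nat.lt_succ_iff.mp (mem_range.mp hj)),
    fun j hj => coeff_mertensPoly_eq_zero hj, ?_⟩
  obtain ⟨c, hc, h⟩ := (summ_pow_asymp mertensPoly_zero derivative_mertensPoly
    natDegree_mertensPoly const_eq_zero k).1
  obtain ⟨b, hb, hl⟩ := loglog_add_two_le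
  refine ⟨c * b ^ (k - 1), fun x hx => ?_⟩
  have hlog := log_pos_of_two_le (by linarith : 2 ≤ x)
  have hll := loglog_ge (by linarith : 2 ≤ x)
  rw [mertensS_eq_summ]
  refine (h x (by linarith)).trans ?_
  rw [mul_assoc, mul_div_assoc, ← mul_pow]
  gcongr
  · linarith
  · exact hl x hx
end

section
/- For x ≥ 3, S_2(x) = (log log x + c_1)^2 − π²/6 + O(log log x / log x). -/
/-!
The proof is elementary: it rests on Mertens' theorems and does not use the prime number theorem.

*Mertens' theorems.* Expanding `log n!` over primes and using Chebyshev's bound gives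
`∑_{p ≤ n} log p / p = log n + O(1)`. A partial summation lemma, `abs_sum_mul_sub_le`, compares
`∑_{p ≤ n} (log p / p) g(p)` with an increment of a primitive of `g t / t`; it replaces integrals
by the mean value theorem. With `g t = 1 / log t` it yields
`P(x) := ∑_{p ≤ x} 1 / p = log log x + M + O(1 / log x)` for some constant `M`.

*The constant.* `mertens_const_eq` identifies `M` with `mertensC1` by Abel summation: the primes
are grouped into blocks according to `⌈log p⌉`, the block sums are compared with the harmonic
series, and the regularised sum is compared, as `s → 0+`, with `log ζ(1 + s) + log (1 - e^{-s})`,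
which tends to `0`; the remaining prime powers contribute the series in the definition of
`mertensC1`.

*The hyperbola method.* Splitting pairs `(p, q)` with `p q ≤ x` by whether `p ≤ √x` or `q ≤ √x`,
`S₂(x) = 2 ∑_{p ≤ √x} P(x / p) / p - P(√x) ^ 2`.
Here `log log (x / p) = log log x + log (1 - log p / log x)`, and partial summation once more,
against the dilogarithm `Li₂` whose derivative is `-log (1 - u) / u`, gives
`∑_{p ≤ √x} (1 / p) log (1 - log p / log x) = -Li₂(1/2) + O(1 / log x)`.
With `P(√x) = log log x - log 2 + M + O(1 / log x)` the main terms combine to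
`(log log x + M) ^ 2 - log 2 ^ 2 - 2 Li₂(1/2)`, and Euler's value
`2 Li₂(1/2) + log 2 ^ 2 = π ^ 2 / 6` finishes the proof. For `3 ≤ x < 4` the sum is
empty, and the remaining terms are absorbed in the constant because `log log 3 > 0`.
-/

open Real Finset

open Filter Topology

/-! ### Mertens' first theorem -/

/-- The weight `log p / p` at primes `p`, and `0` elsewhere. -/
noncomputable def logWeight (k : ℕ) : ℝ := if k.Prime then Real.log k / k else 0

lemma log_factorial_eq_sum_primesLE (n : ℕ) :
    Real.log (n.factorial : ℝ) =
      ∑ p ∈ n.primesLE, ((n.factorial).factorization p : ℝ) * Real.log p := by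
  rw [Real.log_nat_eq_sum_factorization, Finsupp.sum]
  refine Finset.sum_subset ?_ ?_
  · intro p hp
    rw [Nat.support_factorization, Nat.mem_primeFactors] at hp
    rw [Nat.mem_primesLE]
    exact ⟨(hp.1.dvd_factorial).1 hp.2.1, hp.1⟩
  · intro p _ hp
    rw [Finsupp.notMem_support_iff] at hp
    simp [hp]

lemma div_le_factorization_factorial {p : ℕ} (hp : p.Prime) (n : ℕ) :
    n / p ≤ (n.factorial).factorization p := by
  rw [Nat.factorization_factorial hp (b := Nat.log p n + 2) (by omega)]
  have := Finset.single_le_sum (f := fun i => n / p ^ i) (s := Finset.Ico 1 (Nat.log p n + 2))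
    (fun _ _ => Nat.zero_le _) (a := 1) (by simp)
  simpa using this

lemma sum_logWeight_eq (n : ℕ) :
    ∑ k ∈ range (n + 1), logWeight k = ∑ p ∈ n.primesLE, Real.log p / p := by
  rw [Nat.primesLE_eq_filter_range, Finset.sum_filter]; rfl

/-- Comparison of `log n!` with `∑ ⌊n/p⌋ log p` from below, and Chebyshev's bound for the error
made in dropping the integer part. -/
lemma sum_logWeight_le {n : ℕ} (hn : 1 ≤ n) :
    ∑ k ∈ range (n + 1), logWeight k ≤ Real.log n + Real.log 4 := by
  have hn0 : (0 : ℝ) < n := by exact_mod_cast hn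
  have h1 : ∑ p ∈ n.primesLE, ((n : ℝ) / p - 1) * Real.log p ≤ Real.log (n.factorial : ℝ) := by
    rw [log_factorial_eq_sum_primesLE]
    refine Finset.sum_le_sum fun p hp => ?_
    have hpp := Nat.prime_of_mem_primesLE hp
    refine mul_le_mul_of_nonneg_right ?_ (Real.log_natCast_nonneg p)
    have h2 : (n : ℝ) / p < ((n / p : ℕ) : ℝ) + 1 := by
      rw [div_lt_iff₀ (by exact_mod_cast hpp.pos)]
      exact_mod_cast (Nat.lt_mul_div_succ n hpp.pos).trans_eq (mul_comm _ _)
    have h3 : ((n / p : ℕ) : ℝ) ≤ (n.factorial.factorization p : ℝ) := by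
      exact_mod_cast div_le_factorization_factorial hpp n
    linarith
  have h4 : Real.log (n.factorial : ℝ) ≤ n * Real.log n := by
    rw [← Real.log_pow]
    exact Real.log_le_log (by positivity) (by exact_mod_cast Nat.factorial_le_pow n)
  have h5 := Chebyshev.theta_le_log4_mul_x (x := n) (by positivity)
  rw [Chebyshev.theta_eq_sum_primesLE_log] at h5
  have h6 : ∑ p ∈ n.primesLE, ((n : ℝ) / p - 1) * Real.log p
      = n * ∑ p ∈ n.primesLE, Real.log p / p - ∑ p ∈ n.primesLE, Real.log (p : ℝ) := by
    rw [Finset.mul_sum, ← Finset.sum_sub_distrib]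
    exact Finset.sum_congr rfl fun p _ => by ring
  rw [sum_logWeight_eq]
  have : n * ∑ p ∈ n.primesLE, Real.log p / p ≤ n * (Real.log n + Real.log 4) := by linarith
  exact le_of_mul_le_mul_left this hn0

lemma exists_le_sum_logWeight :
    ∃ K : ℝ, ∀ n : ℕ, 1 ≤ n → Real.log n - K ≤ ∑ k ∈ range (n + 1), logWeight k := by
  have hs : Summable fun n : ℕ => 4 * (n : ℝ) ^ (-(3 / 2) : ℝ) :=
    (Real.summable_nat_rpow.2 (by norm_num)).mul_left 4
  refine ⟨1 + ∑' n : ℕ, 4 * (n : ℝ) ^ (-(3 / 2) : ℝ), fun n hn => ?_⟩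
  have hn0 : (0 : ℝ) < n := by exact_mod_cast hn
  have hn1 : (1 : ℝ) ≤ n := by exact_mod_cast hn
  have h1 : Real.log (n.factorial : ℝ) ≤
      ∑ p ∈ n.primesLE, (n * (Real.log p / p) + n * (4 * (p : ℝ) ^ (-(3 / 2) : ℝ))) := by
    rw [log_factorial_eq_sum_primesLE]
    refine Finset.sum_le_sum fun p hp => ?_
    have hpp := Nat.prime_of_mem_primesLE hp
    have hp2 : (2 : ℝ) ≤ p := by exact_mod_cast hpp.two_le
    have hp0 : (0 : ℝ) < p := by linarith
    have h2 : (n.factorial.factorization p : ℝ) ≤ n / ((p : ℝ) - 1) := by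
      have h3 : (n.factorial.factorization p : ℝ) ≤ ((n / (p - 1) : ℕ) : ℝ) := by
        exact_mod_cast Nat.factorization_factorial_le_div_pred hpp n
      refine h3.trans (Nat.cast_div_le.trans ?_)
      rw [Nat.cast_pred hpp.pos]
    have hlog : Real.log p ≤ 2 * (p : ℝ) ^ (1 / 2 : ℝ) := by
      have := Real.log_le_rpow_div hp0.le (ε := 1 / 2) (by norm_num)
      linarith
    have hlog0 : 0 ≤ Real.log p := Real.log_natCast_nonneg p
    -- `log p / (p - 1) = log p / p + log p / (p (p - 1))`, and `p - 1 ≥ p / 2`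
    have h4 : Real.log p / (p * ((p : ℝ) - 1)) ≤ 4 * (p : ℝ) ^ (-(3 / 2) : ℝ) := by
      have e : (p : ℝ) ^ (-(3 / 2) : ℝ) = (p : ℝ) ^ (1 / 2 : ℝ) / p ^ 2 := by
        rw [← Real.rpow_natCast, ← Real.rpow_sub hp0]; norm_num
      rw [e, mul_div_assoc', div_le_div_iff₀ (by nlinarith) (by positivity)]
      have : (p : ℝ) ^ 2 ≤ 2 * (p * ((p : ℝ) - 1)) := by nlinarith
      have hr : 0 ≤ (p : ℝ) ^ (1 / 2 : ℝ) := by positivity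
      nlinarith [mul_le_mul_of_nonneg_left this hr,
        mul_le_mul_of_nonneg_right hlog (sq_nonneg (p : ℝ))]
    calc (n.factorial.factorization p : ℝ) * Real.log p
        ≤ n / ((p : ℝ) - 1) * Real.log p := mul_le_mul_of_nonneg_right h2 hlog0
      _ = n * (Real.log p / p) + n * (Real.log p / (p * ((p : ℝ) - 1))) := by
        have : (p : ℝ) - 1 ≠ 0 := by linarith
        field_simp
        ring
      _ ≤ _ := by gcongr
  have h5 := Stirling.le_log_factorial_stirling (n := n) (by omega)
  have h6 : 0 ≤ Real.log n := Real.log_nonneg hn1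
  have h7 : 0 ≤ Real.log (2 * π) := Real.log_nonneg (by nlinarith [Real.pi_gt_three])
  have h8 : ∑ p ∈ n.primesLE, 4 * (p : ℝ) ^ (-(3 / 2) : ℝ) ≤
      ∑' n : ℕ, 4 * (n : ℝ) ^ (-(3 / 2) : ℝ) := hs.sum_le_tsum _ fun _ _ => by positivity
  rw [Finset.sum_add_distrib, ← Finset.mul_sum, ← Finset.mul_sum] at h1
  rw [sum_logWeight_eq]
  refine le_of_mul_le_mul_left (a := (n : ℝ)) ?_ hn0
  nlinarith [mul_le_mul_of_nonneg_left h8 hn0.le]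

/-- Mertens' first theorem. -/
lemma exists_abs_sum_logWeight_sub_log_le :
    ∃ B : ℝ, ∀ n : ℕ, 1 ≤ n → |∑ k ∈ range (n + 1), logWeight k - Real.log n| ≤ B := by
  obtain ⟨K, hK⟩ := exists_le_sum_logWeight
  refine ⟨max K (Real.log 4), fun n hn => abs_le.2 ⟨?_, ?_⟩⟩
  · linarith [hK n hn, le_max_left K (Real.log 4)]
  · linarith [sum_logWeight_le hn, le_max_right K (Real.log 4)]

/-! ### Partial summation against Mertens' first theorem -/

/-- Partial summation for `∑ g k * a k` when `∑_{k ≤ n} a k = log n + O(1)`: the sum is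
`∫ g(t) dt/t`, here written through a primitive `H` of `g t / t`, up to the size of `g` at the
end points. -/
lemma abs_sum_mul_sub_le (a : ℕ → ℝ) (B : ℝ)
    (hB : ∀ n : ℕ, 1 ≤ n → |∑ k ∈ range (n + 1), a k - Real.log n| ≤ B)
    (g H : ℝ → ℝ) (m N : ℕ) (hm : 1 ≤ m) (hmN : m ≤ N)
    (hg : AntitoneOn g (Set.Icc m N))
    (hH : ∀ t ∈ Set.Icc (m : ℝ) N, HasDerivAt H (g t / t) t) :
    |∑ k ∈ Ioc m N, g k * a k - (H N - H m)| ≤ (2 * B + 1) * (|g m| + |g N|) := by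
  have hB0 : 0 ≤ B := (abs_nonneg _).trans (hB 1 le_rfl)
  set D : ℕ → ℝ := fun n => ∑ k ∈ range (n + 1), a k - Real.log n with hD
  have key : ∀ n : ℕ, m ≤ n → n ≤ N →
      |∑ k ∈ Ioc m n, g k * a k - (H n - H m) - g n * D n + g m * D m|
        ≤ (1 + B) * (g m - g n) := by
    intro n hmn
    induction n, hmn using Nat.le_induction with
    | base => intro _; simp
    | succ n hmn ih =>
      intro hn
      have ih := ih (by omega)
      have hn1 : 1 ≤ n := hm.trans hmn
      have hn0 : (0 : ℝ) < n := by exact_mod_cast hn1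
      have hn1' : (1 : ℝ) ≤ n := by exact_mod_cast hn1
      have hmn' : (m : ℝ) ≤ n := by exact_mod_cast hmn
      have hnN : (n : ℝ) + 1 ≤ N := by exact_mod_cast hn
      have hsub : ∀ t ∈ Set.Icc (n : ℝ) (n + 1), t ∈ Set.Icc (m : ℝ) N := fun t ht =>
        ⟨hmn'.trans ht.1, ht.2.trans hnN⟩
      have hl0 : 0 ≤ Real.log (n + 1) - Real.log n :=
        sub_nonneg.2 (Real.log_le_log hn0 (by linarith))
      have hl1 : Real.log (n + 1) - Real.log n ≤ 1 := by
        rw [← Real.log_div (by positivity) (by positivity)]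
        refine (Real.log_le_sub_one_of_pos (by positivity)).trans ?_
        rw [sub_le_iff_le_add, div_le_iff₀ hn0]; linarith
      -- Cauchy's mean value theorem for the pair `H`, `log`
      obtain ⟨c, hc, hceq⟩ := exists_ratio_hasDerivAt_eq_ratio_slope H (fun t => g t / t)
        (a := (n : ℝ)) (b := (n : ℝ) + 1) (by linarith)
        (fun t ht => (hH t (hsub t ht)).continuousAt.continuousWithinAt)
        (fun t ht => hH t (hsub t (Set.Ioo_subset_Icc_self ht)))
        Real.log (fun t => t⁻¹)
        (fun t ht => (Real.continuousAt_log (by linarith [ht.1])).continuousWithinAt)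
        (fun t ht => Real.hasDerivAt_log (by linarith [ht.1]))
      have hc0 : 0 < c := hn0.trans hc.1
      have hHe : H (n + 1) - H n = g c * (Real.log (n + 1) - Real.log n) := by
        field_simp at hceq
        linarith
      have hgc1 : g c ≤ g n := hg (hsub _ (by simp)) (hsub _ (Set.Ioo_subset_Icc_self hc)) hc.1.le
      have hgc2 : g (n + 1) ≤ g c :=
        hg (hsub _ (Set.Ioo_subset_Icc_self hc)) (hsub _ (by simp)) hc.2.le
      have hDn := hB n hn1
      have ha : a (n + 1) = D (n + 1) - D n + (Real.log (n + 1) - Real.log n) := by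
        simp only [hD]
        rw [Finset.sum_range_succ _ (n + 1)]
        push_cast
        ring
      have e : ∑ k ∈ Ioc m (n + 1), g k * a k - (H (n + 1 : ℕ) - H m)
            - g (n + 1 : ℕ) * D (n + 1) + g m * D m
          = (∑ k ∈ Ioc m n, g k * a k - (H n - H m) - g n * D n + g m * D m)
            + ((g (n + 1) - g c) * (Real.log (n + 1) - Real.log n)
              + (g n - g (n + 1)) * D n) := by
        rw [Finset.sum_Ioc_succ_top (by omega), ha]
        push_cast
        linear_combination (-1) * hHe
      rw [e]
      refine (abs_add_le _ _).trans ?_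
      have h1 : |(g (n + 1) - g c) * (Real.log (n + 1) - Real.log n)| ≤ g n - g (n + 1) := by
        rw [abs_mul, abs_of_nonneg hl0, abs_of_nonpos (by linarith)]
        nlinarith
      have h2 : |(g n - g (n + 1)) * D n| ≤ (g n - g (n + 1)) * B := by
        rw [abs_mul, abs_of_nonneg (by linarith)]
        exact mul_le_mul_of_nonneg_left hDn (by linarith)
      have h3 := abs_add_le ((g (n + 1) - g c) * (Real.log (n + 1) - Real.log n))
        ((g n - g (n + 1)) * D n)
      push_cast at ih ⊢
      linarith
  have h := key N hmN le_rfl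
  have h1 : |g N * D N| ≤ |g N| * B := by
    rw [abs_mul]; exact mul_le_mul_of_nonneg_left (hB N (hm.trans hmN)) (abs_nonneg _)
  have h2 : |g m * D m| ≤ |g m| * B := by
    rw [abs_mul]; exact mul_le_mul_of_nonneg_left (hB m hm) (abs_nonneg _)
  have h3 : (1 + B) * (g m - g N) ≤ (1 + B) * (|g m| + |g N|) :=
    mul_le_mul_of_nonneg_left (by linarith [le_abs_self (g m), neg_abs_le (g N)]) (by linarith)
  have h4 : ∑ k ∈ Ioc m N, g k * a k - (H N - H m)
      = (∑ k ∈ Ioc m N, g k * a k - (H N - H m) - g N * D N + g m * D m)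
        + (g N * D N + -(g m * D m)) := by ring
  rw [h4]
  refine (abs_add_le _ _).trans ?_
  have h5 := abs_add_le (g N * D N) (-(g m * D m))
  rw [abs_neg] at h5
  linarith

/-! ### Mertens' second theorem -/

/-- `∑_{p ≤ n} 1/p`. -/
noncomputable def recipSum (n : ℕ) : ℝ := ∑ p ∈ n.primesLE, 1 / (p : ℝ)

lemma recipSum_eq (n : ℕ) : recipSum n = ∑ k ∈ range (n + 1), if k.Prime then 1 / (k : ℝ) else 0 := by
  rw [recipSum, Nat.primesLE_eq_filter_range, Finset.sum_filter]

lemma recipSum_nonneg (n : ℕ) : 0 ≤ recipSum n := Finset.sum_nonneg fun _ _ => by positivity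

lemma hasDerivAt_log_log {t : ℝ} (ht : 1 < t) :
    HasDerivAt (fun t => Real.log (Real.log t)) (1 / Real.log t / t) t := by
  have := (Real.hasDerivAt_log (by linarith : t ≠ 0)).log (Real.log_pos ht).ne'
  convert this using 1
  field_simp

lemma sum_range_succ_sub {f : ℕ → ℝ} {m N : ℕ} (h : m ≤ N) :
    ∑ k ∈ range (N + 1), f k - ∑ k ∈ range (m + 1), f k = ∑ k ∈ Ioc m N, f k := by
  rw [← Finset.sum_Ico_eq_sub f (by omega : m + 1 ≤ N + 1)]
  congr 1
  ext k; simp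

lemma exists_abs_recipSum_sub_le :
    ∃ C : ℝ, 0 ≤ C ∧ ∀ m N : ℕ, 2 ≤ m → m ≤ N →
      |(recipSum N - Real.log (Real.log N)) - (recipSum m - Real.log (Real.log m))|
        ≤ C / Real.log m := by
  obtain ⟨B, hB⟩ := exists_abs_sum_logWeight_sub_log_le
  have hB0 : 0 ≤ B := (abs_nonneg _).trans (hB 1 le_rfl)
  refine ⟨(2 * B + 1) * 2, by positivity, fun m N hm hmN => ?_⟩
  have hm' : (2 : ℝ) ≤ m := by exact_mod_cast hm
  have hmN' : (m : ℝ) ≤ N := by exact_mod_cast hmN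
  have hlm : 0 < Real.log m := Real.log_pos (by linarith)
  have hlmN : Real.log m ≤ Real.log N := Real.log_le_log (by linarith) hmN'
  have h := abs_sum_mul_sub_le logWeight B hB (fun t => 1 / Real.log t)
    (fun t => Real.log (Real.log t)) m N (by omega) hmN
    (fun s hs t ht hst => one_div_le_one_div_of_le (Real.log_pos (by linarith [hs.1]))
      (Real.log_le_log (by linarith [hs.1]) hst))
    (fun t ht => hasDerivAt_log_log (by linarith [ht.1]))
  have e : recipSum N - recipSum m = ∑ k ∈ Ioc m N, 1 / Real.log k * logWeight k := by
    rw [recipSum_eq, recipSum_eq, sum_range_succ_sub hmN]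
    refine Finset.sum_congr rfl fun k hk => ?_
    have hk : m < k := (Finset.mem_Ioc.1 hk).1
    have : (2 : ℝ) < k := by exact_mod_cast (by omega : 2 < k)
    have : Real.log k ≠ 0 := (Real.log_pos (by linarith)).ne'
    unfold logWeight
    split_ifs
    · field_simp
    · simp
  rw [← e] at h
  have e2 : (recipSum N - Real.log (Real.log N)) - (recipSum m - Real.log (Real.log m))
    = recipSum N - recipSum m - (Real.log (Real.log N) - Real.log (Real.log m)) := by ring
  rw [e2]
  refine h.trans ?_
  rw [abs_of_pos (by positivity), abs_of_pos (by have := hlm.trans_le hlmN; positivity),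
    mul_div_assoc]
  refine mul_le_mul_of_nonneg_left ?_ (by positivity)
  have := one_div_le_one_div_of_le hlm hlmN
  have e3 : 2 / Real.log m = 1 / Real.log m + 1 / Real.log m := by ring
  linarith

/-- Mertens' second theorem, with an unspecified constant. -/
lemma exists_mertens_second :
    ∃ M C : ℝ, 0 ≤ C ∧ ∀ x : ℝ, 2 ≤ x →
      |recipSum ⌊x⌋₊ - (Real.log (Real.log x) + M)| ≤ C / Real.log x := by
  obtain ⟨C, hC0, hC⟩ := exists_abs_recipSum_sub_le
  set u : ℕ → ℝ := fun n => recipSum (n + 2) - Real.log (Real.log (n + 2 : ℕ)) with hu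
  have hlog : Tendsto (fun n : ℕ => Real.log ((n + 2 : ℕ) : ℝ)) atTop atTop :=
    Real.tendsto_log_atTop.comp (tendsto_natCast_atTop_atTop.comp (tendsto_add_atTop_nat 2))
  have hb : Tendsto (fun n : ℕ => 2 * (C / Real.log ((n + 2 : ℕ) : ℝ))) atTop (𝓝 0) := by
    simpa using (hlog.const_div_atTop C).const_mul 2
  have hcau : CauchySeq u := by
    refine cauchySeq_of_le_tendsto_0 _ (fun n m N hn hm => ?_) hb
    have h1 := hC (N + 2) (n + 2) (by omega) (by omega)
    have h2 := hC (N + 2) (m + 2) (by omega) (by omega)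
    rw [Real.dist_eq]
    rw [abs_le] at h1 h2 ⊢
    simp only [hu]
    constructor <;> linarith [h1.1, h1.2, h2.1, h2.2]
  obtain ⟨M, hM⟩ := cauchySeq_tendsto_of_complete hcau
  have hn : ∀ n : ℕ, 2 ≤ n →
      |M - (recipSum n - Real.log (Real.log n))| ≤ C / Real.log n := by
    intro n hn
    have ht : Tendsto (fun k => |u k - (recipSum n - Real.log (Real.log n))|) atTop
        (𝓝 |M - (recipSum n - Real.log (Real.log n))|) := (hM.sub_const _).abs
    refine le_of_tendsto ht ?_
    filter_upwards [eventually_ge_atTop n] with k hk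
    exact hC n (k + 2) hn (by omega)
  refine ⟨M, 2 * (C + 1), by positivity, fun x hx => ?_⟩
  have hx0 : 0 < x := by linarith
  have hn2 : 2 ≤ ⌊x⌋₊ := Nat.le_floor (by exact_mod_cast hx)
  have hfl : (⌊x⌋₊ : ℝ) ≤ x := Nat.floor_le hx0.le
  have hfu : x < ⌊x⌋₊ + 1 := Nat.lt_floor_add_one x
  have hn2' : (2 : ℝ) ≤ ⌊x⌋₊ := by exact_mod_cast hn2
  set n := ⌊x⌋₊
  have hln : 0 < Real.log n := Real.log_pos (by linarith)
  have hle : Real.log n ≤ Real.log x := Real.log_le_log (by linarith) hfl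
  have hle2 : Real.log x ≤ 2 * Real.log n := by
    have : Real.log (n ^ 2 : ℝ) = 2 * Real.log n := by rw [Real.log_pow]; norm_num
    rw [← this]
    exact Real.log_le_log hx0 (by nlinarith)
  have hd : Real.log x - Real.log n ≤ 1 := by
    rw [← Real.log_div hx0.ne' (by positivity)]
    refine (Real.log_le_sub_one_of_pos (by positivity)).trans ?_
    rw [sub_le_iff_le_add, div_le_iff₀ (by positivity)]; linarith
  have hll0 : Real.log (Real.log n) ≤ Real.log (Real.log x) := Real.log_le_log hln hle
  have hll1 : Real.log (Real.log x) - Real.log (Real.log n) ≤ 1 / Real.log n := by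
    rw [← Real.log_div (by linarith) hln.ne']
    refine (Real.log_le_sub_one_of_pos (by have := hln.trans_le hle; positivity)).trans ?_
    rw [div_sub_one hln.ne']
    gcongr
  have h := hn n hn2
  have h2 : (C + 1) / Real.log n ≤ 2 * (C + 1) / Real.log x := by
    rw [div_le_div_iff₀ hln (by linarith)]
    nlinarith
  rw [add_div] at h2
  rw [abs_le] at h ⊢
  constructor <;> linarith [h.1, h.2]

/-! ### The value of the constant -/

lemma tsum_primes_ite_le (f : ℕ → ℝ) (N : ℕ) :
    ∑' p : Nat.Primes, (if (p : ℕ) ≤ N then f p else 0) = ∑ p ∈ N.primesLE, f p := by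
  have h := tsum_subtype {p : ℕ | p.Prime} (fun n => if n ≤ N then f n else 0)
  refine h.trans ?_
  rw [tsum_eq_sum (s := N.primesLE)]
  · refine Finset.sum_congr rfl fun p hp => ?_
    rw [Nat.mem_primesLE] at hp
    simp [Set.indicator, hp.1, hp.2]
  · intro p hp
    rw [Nat.mem_primesLE] at hp
    simp only [Set.indicator, Set.mem_ofPred_eq]
    split_ifs <;> tauto

lemma finite_primes_le (N : ℕ) : {p : Nat.Primes | (p : ℕ) ≤ N}.Finite :=
  (Set.finite_Iic N).preimage (f := fun p : Nat.Primes => (p : ℕ))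
    (Subtype.val_injective.injOn)

lemma log_one_sub_bounds {y : ℝ} (h1 : y ≤ 1 / 2) :
    0 ≤ -Real.log (1 - y) - y ∧ -Real.log (1 - y) - y ≤ 2 * y ^ 2 := by
  have hp : 0 < 1 - y := by linarith
  constructor
  · linarith [Real.log_le_sub_one_of_pos hp]
  · have h := Real.one_sub_inv_le_log_of_pos hp
    have : (1 - y)⁻¹ ≤ 1 + y + 2 * y ^ 2 := by
      rw [inv_le_iff_one_le_mul₀ hp]; nlinarith [mul_nonneg (sq_nonneg y) (by linarith : 0 ≤ 1 - 2 * y)]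
    linarith

lemma prime_rpow_le {s : ℝ} (hs : 0 ≤ s) (p : Nat.Primes) :
    (p : ℝ) ^ (-(1 + s)) ≤ 1 / p := by
  have hp : (2 : ℝ) ≤ p := by exact_mod_cast p.2.two_le
  rw [one_div, ← Real.rpow_neg_one]
  exact Real.rpow_le_rpow_of_exponent_le (by linarith) (by linarith)

lemma one_div_prime_le_half (p : Nat.Primes) : 1 / (p : ℝ) ≤ 1 / 2 :=
  one_div_le_one_div_of_le (by norm_num) (by exact_mod_cast p.2.two_le)

lemma tail_bounds {s : ℝ} (hs : 0 ≤ s) (p : Nat.Primes) :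
    0 ≤ -Real.log (1 - (p : ℝ) ^ (-(1 + s))) - (p : ℝ) ^ (-(1 + s)) ∧
      -Real.log (1 - (p : ℝ) ^ (-(1 + s))) - (p : ℝ) ^ (-(1 + s)) ≤ 2 * (p : ℝ) ^ (-2 : ℝ) := by
  have h1 := prime_rpow_le hs p
  have h := log_one_sub_bounds (h1.trans (one_div_prime_le_half p))
  refine ⟨h.1, h.2.trans ?_⟩
  have : (p : ℝ) ^ (-2 : ℝ) = (1 / p) ^ 2 := by
    rw [Real.rpow_neg (by positivity)]; norm_num
  rw [this]
  gcongr

lemma summable_prime_rpow {s : ℝ} (hs : 0 < s) :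
    Summable fun p : Nat.Primes => (p : ℝ) ^ (-(1 + s)) :=
  Nat.Primes.summable_rpow.2 (by linarith)

lemma summable_tail {s : ℝ} (hs : 0 ≤ s) : Summable fun p : Nat.Primes =>
    -Real.log (1 - (p : ℝ) ^ (-(1 + s))) - (p : ℝ) ^ (-(1 + s)) :=
  Summable.of_nonneg_of_le (fun p => (tail_bounds hs p).1) (fun p => (tail_bounds hs p).2)
    ((Nat.Primes.summable_rpow.2 (by norm_num)).mul_left 2)

/-- The logarithm of the Euler product for `ζ(1 + s)`. -/
lemma log_zeta_eq {s : ℝ} (hs : 0 < s) :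
    0 < ∑' n : ℕ, 1 / (n : ℝ) ^ (1 + s) ∧
    Real.log (∑' n : ℕ, 1 / (n : ℝ) ^ (1 + s)) =
      ∑' p : Nat.Primes, (p : ℝ) ^ (-(1 + s)) +
      ∑' p : Nat.Primes, (-Real.log (1 - (p : ℝ) ^ (-(1 + s))) - (p : ℝ) ^ (-(1 + s))) := by
  let f : ℕ →*₀ ℝ :=
    { toFun := fun n => (n : ℝ) ^ (-(1 + s))
      map_zero' := by
        simp only [Nat.cast_zero]
        exact Real.zero_rpow (by linarith)
      map_one' := by simp
      map_mul' := fun m n => by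
        push_cast
        exact Real.mul_rpow (by positivity) (by positivity) }
  have hf : ∀ n : ℕ, f n = (n : ℝ) ^ (-(1 + s)) := fun n => rfl
  have hsum : Summable fun n => ‖f n‖ := by
    have : Summable fun n : ℕ => (n : ℝ) ^ (-(1 + s)) := Real.summable_nat_rpow.2 (by linarith)
    refine this.congr fun n => ?_
    rw [hf, Real.norm_of_nonneg (by positivity)]
  have h1 := EulerProduct.eulerProduct_completely_multiplicative_hasProd hsum
  have h2 := (((summable_prime_rpow hs).hasSum.add (summable_tail hs.le).hasSum)).rexp
  have h3 : (rexp ∘ fun p : Nat.Primes => (p : ℝ) ^ (-(1 + s)) +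
      (-Real.log (1 - (p : ℝ) ^ (-(1 + s))) - (p : ℝ) ^ (-(1 + s))))
      = fun p : Nat.Primes => (1 - f p)⁻¹ := by
    funext p
    have := (prime_rpow_le hs.le p).trans (one_div_prime_le_half p)
    simp only [Function.comp, hf, add_sub_cancel]
    rw [Real.exp_neg, Real.exp_log (by linarith)]
  rw [h3] at h2
  have h4 := h1.unique h2
  have h5 : ∑' n : ℕ, 1 / (n : ℝ) ^ (1 + s) = ∑' n : ℕ, f n := by
    refine tsum_congr fun n => ?_
    rw [hf, Real.rpow_neg (by positivity), one_div]
  rw [h5, h4, Real.log_exp]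
  exact ⟨Real.exp_pos _, rfl⟩

/-- Total weight `∑ 1/p` over the primes with `⌈log p⌉ = k`. -/
noncomputable def blockWeight (k : ℕ) : ℝ :=
  ∑' p : Nat.Primes, if ⌈Real.log (p : ℝ)⌉₊ = k then 1 / (p : ℝ) else 0

lemma ceil_log_le_iff (p : Nat.Primes) (K : ℕ) :
    ⌈Real.log (p : ℝ)⌉₊ ≤ K ↔ (p : ℕ) ≤ ⌊Real.exp K⌋₊ := by
  have hp : (0 : ℝ) < p := by exact_mod_cast p.2.pos
  rw [Nat.ceil_le, Nat.le_floor_iff (by positivity), Real.log_le_iff_le_exp hp]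

lemma sum_blockWeight (K : ℕ) :
    ∑ k ∈ range (K + 1), blockWeight k = recipSum ⌊Real.exp K⌋₊ := by
  unfold blockWeight
  rw [← Summable.tsum_finsetSum]
  · rw [recipSum, ← tsum_primes_ite_le]
    refine tsum_congr fun p => ?_
    rw [Finset.sum_ite_eq]
    simp only [Finset.mem_range, Nat.lt_succ_iff, ceil_log_le_iff]
  · intro k _
    refine summable_of_hasFiniteSupport ((finite_primes_le ⌊Real.exp k⌋₊).subset ?_)
    intro p hp
    rw [Function.mem_support] at hp
    by_contra hcon
    rw [Set.mem_ofPred_eq, ← ceil_log_le_iff] at hcon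
    exact hp (if_neg (by omega))

/-- Replacing `p ^ (-s)` by `exp (-s ⌈log p⌉)` changes the prime zeta sum `T` by at most `s T`,
and groups it into a power series in `exp (-s)`. -/
lemma blockWeight_series {s : ℝ} (hs : 0 < s) :
    ∃ W : ℝ, HasSum (fun k : ℕ => blockWeight k * Real.exp (-s) ^ k) W ∧
      W ≤ ∑' p : Nat.Primes, (p : ℝ) ^ (-(1 + s)) ∧
      (1 - s) * ∑' p : Nat.Primes, (p : ℝ) ^ (-(1 + s)) ≤ W := by
  set F : Nat.Primes → ℝ := fun p => 1 / (p : ℝ) * Real.exp (-s) ^ ⌈Real.log (p : ℝ)⌉₊ with hF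
  have hT := summable_prime_rpow hs
  have hb : ∀ p : Nat.Primes, (1 - s) * (p : ℝ) ^ (-(1 + s)) ≤ F p ∧
      F p ≤ (p : ℝ) ^ (-(1 + s)) := by
    intro p
    have hp : (0 : ℝ) < p := by exact_mod_cast p.2.pos
    have hl : 0 ≤ Real.log (p : ℝ) := Real.log_natCast_nonneg p
    have e : (p : ℝ) ^ (-(1 + s)) = 1 / p * Real.exp (-(s * Real.log p)) := by
      rw [neg_add, Real.rpow_add hp, Real.rpow_neg_one, Real.rpow_def_of_pos hp, one_div]
      congr 2; ring
    have e2 : F p = 1 / p * Real.exp (-(s * ⌈Real.log (p : ℝ)⌉₊)) := by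
      simp only [hF]
      rw [← Real.exp_nat_mul]; congr 2; ring
    have hc1 := Nat.le_ceil (Real.log (p : ℝ))
    have hc2 := Nat.ceil_lt_add_one hl
    rw [e, e2]
    have hp' : 0 ≤ 1 / (p : ℝ) := by positivity
    constructor
    · rw [mul_left_comm]
      refine mul_le_mul_of_nonneg_left ?_ hp'
      have h1 : Real.exp (-(s * ⌈Real.log (p : ℝ)⌉₊))
          = Real.exp (-(s * (⌈Real.log (p : ℝ)⌉₊ - Real.log p))) *
            Real.exp (-(s * Real.log p)) := by
        rw [← Real.exp_add]; congr 1; ring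
      rw [h1]
      refine mul_le_mul_of_nonneg_right ?_ (Real.exp_pos _).le
      have := Real.add_one_le_exp (-(s * (⌈Real.log (p : ℝ)⌉₊ - Real.log p)))
      nlinarith
    · refine mul_le_mul_of_nonneg_left ?_ hp'
      refine Real.exp_le_exp.2 ?_
      nlinarith
  have hFs : Summable F := Summable.of_nonneg_of_le (fun p => by simp only [hF]; positivity)
    (fun p => (hb p).2) hT
  refine ⟨∑' p, F p, ?_, hFs.tsum_le_tsum (fun p => (hb p).2) hT, ?_⟩
  · have h := hFs.hasSum.tsum_fiberwise (fun p : Nat.Primes => ⌈Real.log (p : ℝ)⌉₊)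
    refine h.congr_fun fun k => ?_
    rw [tsum_subtype (((fun p : Nat.Primes => ⌈Real.log (p : ℝ)⌉₊) ⁻¹' {k})) F, blockWeight,
      ← tsum_mul_right]
    refine tsum_congr fun p => ?_
    simp only [Set.indicator, Set.mem_preimage, Set.mem_singleton_iff, hF]
    split_ifs with hk
    · rw [hk]
    · simp
  · rw [← tsum_mul_left]
    exact (hT.mul_left _).tsum_le_tsum (fun p => (hb p).1) hFs

lemma hasSum_inv_mul_pow {z : ℝ} (h0 : 0 ≤ z) (h1 : z < 1) :
    HasSum (fun k : ℕ => 1 / (k : ℝ) * z ^ k) (-Real.log (1 - z)) := by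
  have h := Real.hasSum_pow_div_log_of_abs_lt_one (x := z) (by rwa [abs_of_nonneg h0])
  have h2 : HasSum (fun k : ℕ => 1 / ((k + 1 : ℕ) : ℝ) * z ^ (k + 1)) (-Real.log (1 - z)) := by
    refine h.congr_fun fun k => ?_
    push_cast; ring
  have h3 := (hasSum_nat_add_iff (f := fun k : ℕ => 1 / (k : ℝ) * z ^ k) 1).1 h2
  simpa using h3

lemma tendsto_tail_tsum : Tendsto (fun s : ℝ => ∑' p : Nat.Primes,
      (-Real.log (1 - (p : ℝ) ^ (-(1 + s))) - (p : ℝ) ^ (-(1 + s)))) (𝓝[>] 0)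
    (𝓝 (∑' p : Nat.Primes, (Real.log (1 / (1 - 1 / (p : ℝ))) - 1 / (p : ℝ)))) := by
  refine tendsto_tsum_of_dominated_convergence
    (bound := fun p : Nat.Primes => 2 * (p : ℝ) ^ (-2 : ℝ))
    ((Nat.Primes.summable_rpow.2 (by norm_num)).mul_left 2) ?_ ?_
  · intro p
    have hp : (0 : ℝ) < p := by exact_mod_cast p.2.pos
    have hph := one_div_prime_le_half p
    have h1 : Tendsto (fun s : ℝ => (p : ℝ) ^ (-(1 + s))) (𝓝[>] 0) (𝓝 (1 / (p : ℝ))) := by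
      have hc : Continuous fun s : ℝ => (p : ℝ) ^ (-(1 + s)) :=
        Continuous.rpow continuous_const (by fun_prop) (fun _ => Or.inl hp.ne')
      have := (hc.tendsto 0).mono_left (nhdsWithin_le_nhds (s := Set.Ioi 0))
      simpa [Real.rpow_neg_one] using this
    have h2 : Real.log (1 / (1 - 1 / (p : ℝ))) = -Real.log (1 - 1 / (p : ℝ)) := by
      rw [one_div (1 - 1 / (p : ℝ)), Real.log_inv]
    rw [h2]
    exact ((h1.const_sub 1).log (by linarith)).neg.sub h1
  · filter_upwards [self_mem_nhdsWithin] with s hs p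
    have := tail_bounds (le_of_lt hs) p
    rw [Real.norm_of_nonneg this.1]
    exact this.2

lemma tendsto_mul_zeta : Tendsto (fun s : ℝ => s * ∑' n : ℕ, 1 / (n : ℝ) ^ (1 + s)) (𝓝[>] 0)
    (𝓝 1) := by
  have h : Tendsto (fun s : ℝ => 1 + s) (𝓝[>] 0) (𝓝[>] 1) := by
    refine tendsto_nhdsWithin_iff.2 ⟨?_, ?_⟩
    · have : Tendsto (fun s : ℝ => 1 + s) (𝓝 0) (𝓝 (1 + 0)) := (by fun_prop : Continuous _).tendsto _
      rw [add_zero] at this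
      exact this.mono_left nhdsWithin_le_nhds
    · filter_upwards [self_mem_nhdsWithin] with s hs
      have : (0 : ℝ) < s := hs
      simp only [Set.mem_Ioi]; linarith
  have := tendsto_sub_mul_tsum_nat_rpow.comp h
  refine this.congr fun s => ?_
  simp [Function.comp]

lemma tendsto_one_sub_exp_div : Tendsto (fun s : ℝ => (1 - Real.exp (-s)) / s) (𝓝[>] 0)
    (𝓝 1) := by
  have h : HasDerivAt (fun s : ℝ => 1 - Real.exp (-s)) 1 0 := by
    have := ((hasDerivAt_neg (0 : ℝ)).exp).const_sub 1
    simpa using this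
  have h2 := (hasDerivAt_iff_tendsto_slope.1 h).mono_left
    (nhdsWithin_mono (0 : ℝ) (fun x (hx : 0 < x) => hx.ne' : Set.Ioi (0 : ℝ) ⊆ {0}ᶜ))
  refine h2.congr fun s => ?_
  simp [slope_def_field]

/-- The constant in Mertens' second theorem is `mertensC1`.  Abel's limit theorem applied to
`∑ (blockWeight k - 1 / k) exp (-s k)` compares it with `log ζ(1 + s) + log (1 - exp (-s))`,
which tends to `0`. -/
lemma mertens_const_eq {M C : ℝ} (hM : ∀ x : ℝ, 2 ≤ x →
      |recipSum ⌊x⌋₊ - (Real.log (Real.log x) + M)| ≤ C / Real.log x) : M = mertensC1 := by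
  have hpart : Tendsto (fun n => ∑ k ∈ range n, (blockWeight k - 1 / (k : ℝ))) atTop
      (𝓝 (M - Real.eulerMascheroniConstant)) := by
    rw [← tendsto_add_atTop_iff_nat 1]
    have h1 : Tendsto (fun K : ℕ => recipSum ⌊Real.exp K⌋₊ - (Real.log K + M)) atTop (𝓝 0) := by
      have hb : Tendsto (fun K : ℕ => C / (K : ℝ)) atTop (𝓝 0) :=
        tendsto_natCast_atTop_atTop.const_div_atTop C
      refine squeeze_zero_norm' ?_ hb
      filter_upwards [eventually_ge_atTop 1] with K hK
      have hK' : (1 : ℝ) ≤ K := by exact_mod_cast hK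
      have := hM (Real.exp K) (by linarith [Real.add_one_le_exp (K : ℝ)])
      rwa [Real.log_exp] at this
    have h2 := (h1.add_const M).sub Real.tendsto_harmonic_sub_log
    rw [zero_add] at h2
    refine h2.congr fun K => ?_
    rw [Finset.sum_sub_distrib, sum_blockWeight]
    have : ∑ k ∈ range (K + 1), 1 / (k : ℝ) = (harmonic K : ℝ) := by
      rw [Finset.sum_range_succ', harmonic]
      simp
    rw [this]; ring
  have habel := Real.tendsto_tsum_powerSeries_nhdsWithin_lt hpart
  have hexp : Tendsto (fun s : ℝ => Real.exp (-s)) (𝓝[>] 0) (𝓝[<] 1) := by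
    refine tendsto_nhdsWithin_iff.2 ⟨?_, ?_⟩
    · have : Tendsto (fun s : ℝ => Real.exp (-s)) (𝓝 0) (𝓝 (Real.exp (-0))) :=
        (by fun_prop : Continuous _).tendsto _
      rw [neg_zero, Real.exp_zero] at this
      exact this.mono_left nhdsWithin_le_nhds
    · filter_upwards [self_mem_nhdsWithin] with s hs
      have : (0 : ℝ) < s := hs
      simp only [Set.mem_Iio, Real.exp_lt_one_iff]; linarith
  have h1 := habel.comp hexp
  set z : ℝ → ℝ := fun s => ∑' n : ℕ, 1 / (n : ℝ) ^ (1 + s) with hz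
  set T : ℝ → ℝ := fun s => ∑' p : Nat.Primes, (p : ℝ) ^ (-(1 + s)) with hT
  set G : ℝ → ℝ := fun s => ∑' p : Nat.Primes,
    (-Real.log (1 - (p : ℝ) ^ (-(1 + s))) - (p : ℝ) ^ (-(1 + s))) with hG
  have hG0 := tendsto_tail_tsum
  -- `log ζ(1+s) + log (1 - exp (-s)) → 0`
  have hL : Tendsto (fun s => Real.log (s * z s) + Real.log ((1 - Real.exp (-s)) / s)) (𝓝[>] 0)
      (𝓝 0) := by
    have := (tendsto_mul_zeta.log one_ne_zero).add (tendsto_one_sub_exp_div.log one_ne_zero)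
    simpa only [Real.log_one, add_zero] using this
  have hid : Tendsto (fun s : ℝ => s) (𝓝[>] 0) (𝓝 0) := tendsto_id.mono_left nhdsWithin_le_nhds
  -- `s T(s) → 0`, because `T(s) = log ζ(1+s) - G(s)` and `s log s → 0`
  have hsT : Tendsto (fun s => s * T s) (𝓝[>] 0) (𝓝 0) := by
    have a1 := hid.mul (tendsto_mul_zeta.log one_ne_zero)
    have a2 := tendsto_log_mul_rpow_nhdsGT_zero one_pos
    simp only [Real.rpow_one] at a2
    have a3 := hid.mul hG0
    have := (a1.sub a2).sub a3
    simp only [zero_mul, sub_zero] at this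
    refine this.congr' ?_
    filter_upwards [self_mem_nhdsWithin] with s hs
    have hs : (0 : ℝ) < s := hs
    obtain ⟨hz0, hlz⟩ := log_zeta_eq hs
    rw [Real.log_mul hs.ne' hz0.ne', hlz]
    ring
  have hdiff : Tendsto (fun s => Real.log (s * z s) + Real.log ((1 - Real.exp (-s)) / s) - G s
      - ∑' k : ℕ, (blockWeight k - 1 / (k : ℝ)) * Real.exp (-s) ^ k) (𝓝[>] 0) (𝓝 0) := by
    refine squeeze_zero_norm' ?_ hsT
    filter_upwards [self_mem_nhdsWithin] with s hs
    have hs : (0 : ℝ) < s := hs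
    obtain ⟨hz0, hlz⟩ := log_zeta_eq hs
    obtain ⟨W, hW, hW1, hW2⟩ := blockWeight_series hs
    have he : Real.exp (-s) < 1 := by rw [Real.exp_lt_one_iff]; linarith
    have h3 := hW.sub (hasSum_inv_mul_pow (Real.exp_pos (-s)).le he)
    have h4 : ∑' k : ℕ, (blockWeight k - 1 / (k : ℝ)) * Real.exp (-s) ^ k
        = W - -Real.log (1 - Real.exp (-s)) := by
      rw [← h3.tsum_eq]
      exact tsum_congr fun k => by ring
    rw [h4, Real.log_mul hs.ne' hz0.ne', Real.log_div (by linarith) hs.ne', hlz, Real.norm_eq_abs,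
      abs_le]
    simp only [hG, hT] at *
    constructor <;> linarith
  have hfin := (hL.sub hG0).sub hdiff
  have h5 := tendsto_nhds_unique h1 (hfin.congr fun s => by simp only [Function.comp]; ring)
  unfold mertensC1
  linarith

/-! ### The dilogarithm -/

/-- The dilogarithm `Li₂ u = ∑_{n ≥ 1} u ^ n / n ^ 2`, used on `[0, 1]`. -/
noncomputable def dilog (u : ℝ) : ℝ := ∑' n : ℕ, u ^ (n + 1) / ((n : ℝ) + 1) ^ 2

lemma hasSum_one_div_succ_sq : HasSum (fun n : ℕ => 1 / ((n : ℝ) + 1) ^ 2) (π ^ 2 / 6) := by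
  have h := (hasSum_nat_add_iff' 1).2 hasSum_zeta_two
  simpa using h

lemma dilog_zero : dilog 0 = 0 := by simp [dilog]

lemma dilog_one : dilog 1 = π ^ 2 / 6 := by
  simpa [dilog] using hasSum_one_div_succ_sq.tsum_eq

lemma continuousOn_dilog : ContinuousOn dilog (Set.Icc 0 1) := by
  refine continuousOn_tsum (u := fun n : ℕ => 1 / ((n : ℝ) + 1) ^ 2)
    (fun n => by fun_prop) hasSum_one_div_succ_sq.summable fun n u hu => ?_
  rw [Real.norm_of_nonneg (div_nonneg (pow_nonneg hu.1 _) (by positivity))]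
  gcongr
  exact pow_le_one₀ hu.1 hu.2

lemma hasDerivAt_dilog {u : ℝ} (h0 : 0 < u) (h1 : u < 1) :
    HasDerivAt dilog (-Real.log (1 - u) / u) u := by
  set r : ℝ := (1 + u) / 2 with hr
  have hr0 : 0 ≤ r := by linarith
  have hr1 : r < 1 := by linarith
  have h := hasDerivAt_tsum_of_isPreconnected
    (g := fun (n : ℕ) (z : ℝ) => z ^ (n + 1) / ((n : ℝ) + 1) ^ 2)
    (g' := fun (n : ℕ) (z : ℝ) => z ^ n / ((n : ℝ) + 1)) (y₀ := 0)
    (summable_geometric_of_lt_one hr0 hr1)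
    (isOpen_Ioo (a := -r) (b := r)) isPreconnected_Ioo
    (fun n y _ => by
      have := (hasDerivAt_pow (n + 1) y).div_const (((n : ℝ) + 1) ^ 2)
      refine this.congr_deriv ?_
      have : (n : ℝ) + 1 ≠ 0 := by positivity
      rw [Nat.add_sub_cancel]
      push_cast
      field_simp)
    (fun n y hy => by
      have hy' : |y| ≤ r := abs_le.2 ⟨hy.1.le, hy.2.le⟩
      rw [Real.norm_eq_abs, abs_div, abs_pow, abs_of_nonneg (by positivity : (0 : ℝ) ≤ n + 1)]
      have h1 : |y| ^ n ≤ r ^ n := by gcongr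
      refine (div_le_self (by positivity) (by linarith [(n.cast_nonneg : (0 : ℝ) ≤ n)])).trans h1)
    (y := u) ⟨by linarith, by linarith⟩ (by simp [summable_zero]) ⟨by linarith, by linarith⟩
  have hs : ∑' n : ℕ, u ^ n / ((n : ℝ) + 1) = -Real.log (1 - u) / u := by
    rw [← (Real.hasSum_pow_div_log_of_abs_lt_one (x := u)
      (by rw [abs_of_pos h0]; exact h1)).tsum_eq, ← tsum_div_const]
    refine tsum_congr fun n => ?_
    field_simp
    ring
  rw [← hs]
  exact h

lemma abs_log_one_sub_le {u : ℝ} (h0 : 0 ≤ u) (h1 : u ≤ 1 / 2) :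
    |Real.log (1 - u)| ≤ 2 * u := by
  have h := log_one_sub_bounds h1
  rw [abs_of_nonpos (by linarith)]
  nlinarith

lemma dilog_sub_bounds {u v : ℝ} (h0 : 0 ≤ u) (huv : u ≤ v) (h1 : v ≤ 1 / 2) :
    0 ≤ dilog v - dilog u ∧ dilog v - dilog u ≤ 2 * (v - u) := by
  rcases huv.eq_or_lt with rfl | huv
  · simp
  obtain ⟨c, hc, he⟩ := exists_hasDerivAt_eq_slope dilog (fun u => -Real.log (1 - u) / u) huv
    (continuousOn_dilog.mono fun t ht => ⟨h0.trans ht.1, by linarith [ht.2]⟩)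
    (fun t ht => hasDerivAt_dilog (h0.trans_lt ht.1) (by linarith [ht.2]))
  have hc0 : 0 < c := h0.trans_lt hc.1
  have hc1 : c ≤ 1 / 2 := hc.2.le.trans h1
  have hb := log_one_sub_bounds hc1
  have e : dilog v - dilog u = (-Real.log (1 - c) / c) * (v - u) := by
    rw [he, div_mul_cancel₀]; linarith
  have b0 : 0 ≤ -Real.log (1 - c) / c := div_nonneg (by linarith) hc0.le
  have b1 : -Real.log (1 - c) / c ≤ 2 := by
    rw [div_le_iff₀ hc0]; nlinarith
  rw [e]
  exact ⟨mul_nonneg b0 (by linarith), mul_le_mul_of_nonneg_right b1 (by linarith)⟩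

/-- Euler's reflection formula `Li₂ u + Li₂ (1 - u) + log u log (1 - u) = π² / 6` at `u = 1/2`. -/
lemma two_mul_dilog_half : 2 * dilog (1 / 2) + Real.log 2 ^ 2 = π ^ 2 / 6 := by
  set φ : ℝ → ℝ := fun u => dilog u + dilog (1 - u) + Real.log u * Real.log (1 - u) with hφ
  have hd : ∀ u ∈ Set.Ioo (0 : ℝ) 1, HasDerivAt φ 0 u := by
    intro u hu
    have h0 : 0 < u := hu.1
    have h1 : 0 < 1 - u := by linarith [hu.2]
    have hs : HasDerivAt (fun u : ℝ => 1 - u) (-1) u := (hasDerivAt_id u).const_sub 1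
    have d1 := hasDerivAt_dilog hu.1 hu.2
    have d2 := (hasDerivAt_dilog h1 (by linarith)).comp u hs
    have d3 := (Real.hasDerivAt_log h0.ne').mul (hs.log h1.ne')
    refine ((d1.add d2).add d3).congr_deriv ?_
    rw [sub_sub_cancel]
    field_simp
    ring
  have hconst : ∀ u ∈ Set.Ioo (0 : ℝ) 1, φ u = φ (1 / 2) := by
    intro u hu
    refine isOpen_Ioo.is_const_of_deriv_eq_zero isPreconnected_Ioo
      (fun t ht => (hd t ht).differentiableAt.differentiableWithinAt)
      (fun t ht => (hd t ht).deriv) hu ⟨by norm_num, by norm_num⟩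
  have hlim : Tendsto φ (𝓝[>] 0) (𝓝 (π ^ 2 / 6)) := by
    have hev : ∀ᶠ u : ℝ in 𝓝[>] 0, u ∈ Set.Ioo (0 : ℝ) (1 / 2) :=
      Ioo_mem_nhdsGT (by norm_num)
    have hid : Tendsto (fun u : ℝ => u) (𝓝[>] 0) (𝓝 0) := tendsto_id.mono_left nhdsWithin_le_nhds
    have l1 : Tendsto dilog (𝓝[>] 0) (𝓝 0) := by
      have h := continuousOn_dilog 0 (by simp)
      rw [ContinuousWithinAt, dilog_zero] at h
      refine h.comp (tendsto_nhdsWithin_iff.2 ⟨hid, ?_⟩)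
      filter_upwards [hev] with u hu
      exact ⟨hu.1.le, by linarith [hu.2]⟩
    have l2 : Tendsto (fun u => dilog (1 - u)) (𝓝[>] 0) (𝓝 (π ^ 2 / 6)) := by
      have h := continuousOn_dilog 1 (by simp)
      rw [ContinuousWithinAt, dilog_one] at h
      refine h.comp (tendsto_nhdsWithin_iff.2 ⟨by simpa using hid.const_sub 1, ?_⟩)
      filter_upwards [hev] with u hu
      exact ⟨by linarith [hu.2], by linarith [hu.1]⟩
    have l3 : Tendsto (fun u => Real.log u * Real.log (1 - u)) (𝓝[>] 0) (𝓝 0) := by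
      have a := (tendsto_log_mul_rpow_nhdsGT_zero one_pos).abs.const_mul 2
      simp only [Real.rpow_one, abs_zero, mul_zero] at a
      refine squeeze_zero_norm' ?_ a
      filter_upwards [hev] with u hu
      rw [Real.norm_eq_abs, abs_mul, abs_mul, abs_of_pos hu.1]
      have := abs_log_one_sub_le hu.1.le hu.2.le
      nlinarith [abs_nonneg (Real.log u)]
    have := (l1.add l2).add l3
    simpa only [zero_add, add_zero] using this
  have h1 : Tendsto φ (𝓝[>] 0) (𝓝 (φ (1 / 2))) := by
    refine tendsto_const_nhds.congr' ?_
    filter_upwards [Ioo_mem_nhdsGT (zero_lt_one' ℝ)] with u hu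
    exact (hconst u hu).symm
  have h2 := tendsto_nhds_unique h1 hlim
  rw [← h2]
  have hl : Real.log (1 / 2) = -Real.log 2 := by rw [one_div, Real.log_inv]
  simp only [hφ, show (1 : ℝ) - 1 / 2 = 1 / 2 by norm_num, hl]
  ring

/-! ### The logarithmic prime sum -/

lemma antitone_log_one_sub_div {u v : ℝ} (h0 : 0 < u) (huv : u ≤ v) (h1 : v < 1) :
    Real.log (1 - v) / v ≤ Real.log (1 - u) / u := by
  have h := strictConcaveOn_log_Ioi.concaveOn.neg.secant_mono (a := 1) (x := 1 - v) (y := 1 - u)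
    (by simp) (by simpa using h1) (by simpa using huv.trans_lt h1)
    (by linarith) (by linarith) (by linarith)
  simpa [neg_div_neg_eq] using h

/-- Rounding the cut-off `√x` down to an integer changes its logarithm by at most `1`. -/
lemma floor_sqrt_facts {x : ℝ} (hx : 4 ≤ x) :
    2 ≤ ⌊√x⌋₊ ∧ Real.log ⌊√x⌋₊ ≤ Real.log x / 2 ∧ Real.log x / 2 - 1 ≤ Real.log ⌊√x⌋₊ := by
  have hs : 2 ≤ √x := Real.le_sqrt_of_sq_le (by norm_num; exact hx)
  have hn2 : 2 ≤ ⌊√x⌋₊ := Nat.le_floor (by exact_mod_cast hs)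
  have hn2' : (2 : ℝ) ≤ ⌊√x⌋₊ := by exact_mod_cast hn2
  have hl : Real.log √x = Real.log x / 2 := Real.log_sqrt (by linarith)
  refine ⟨hn2, ?_, ?_⟩
  · rw [← hl]
    exact Real.log_le_log (by linarith) (Nat.floor_le (by positivity))
  · rw [← hl]
    have h : Real.log √x - Real.log ⌊√x⌋₊ ≤ 1 := by
      rw [← Real.log_div (by positivity) (by positivity)]
      refine (Real.log_le_sub_one_of_pos (by positivity)).trans ?_
      rw [sub_le_iff_le_add, div_le_iff₀ (by positivity)]
      linarith [Nat.lt_floor_add_one √x]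
    linarith

/-- With `u = log t / log x`, the sum is approximately
`∫ log (1 - u) du / u = -Li₂ (1/2)` over `0 < u ≤ 1/2`. -/
lemma exists_abs_sum_log_one_sub_le : ∃ K : ℝ, 0 ≤ K ∧ ∀ x : ℝ, 4 ≤ x →
    |∑ p ∈ (⌊√x⌋₊).primesLE, 1 / (p : ℝ) * Real.log (1 - Real.log p / Real.log x)
      + dilog (1 / 2)| ≤ K / Real.log x := by
  obtain ⟨B, hB⟩ := exists_abs_sum_logWeight_sub_log_le
  have hB0 : 0 ≤ B := (abs_nonneg _).trans (hB 1 le_rfl)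
  refine ⟨(2 * B + 1) * 4 + 5, by positivity, fun x hx => ?_⟩
  obtain ⟨hN2, hN1, hN0⟩ := floor_sqrt_facts hx
  set N := ⌊√x⌋₊
  set l := Real.log x with hl
  have hN2' : (2 : ℝ) ≤ N := by exact_mod_cast hN2
  have hl2 : Real.log 2 ≤ Real.log N := Real.log_le_log (by norm_num) hN2'
  have h2 : 0 < Real.log 2 := Real.log_pos (by norm_num)
  have h21 : Real.log 2 ≤ 1 := by linarith [Real.log_two_lt_d9]
  have hl0 : 0 < l := by linarith
  have hu : ∀ t ∈ Set.Icc ((2 : ℕ) : ℝ) N, 0 < Real.log t ∧ 0 < Real.log t / l ∧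
      Real.log t / l ≤ 1 / 2 := by
    intro t ht
    have ht2 : (2 : ℝ) ≤ t := by exact_mod_cast ht.1
    have hpos : 0 < Real.log t := Real.log_pos (by linarith)
    have hle : Real.log t ≤ Real.log N := Real.log_le_log (by linarith) ht.2
    refine ⟨hpos, by positivity, ?_⟩
    rw [div_le_iff₀ hl0]; linarith
  set g : ℝ → ℝ := fun t => Real.log (1 - Real.log t / l) / Real.log t with hg
  have hgu : ∀ t, g t = Real.log (1 - Real.log t / l) / (Real.log t / l) / l := by
    intro t
    simp only [hg]
    rw [div_div, div_mul_cancel₀ _ hl0.ne']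
  have hgb : ∀ t ∈ Set.Icc ((2 : ℕ) : ℝ) N, |g t| ≤ 2 / l := by
    intro t ht
    obtain ⟨a, b, c⟩ := hu t ht
    have := abs_log_one_sub_le b.le c
    simp only [hg]
    rw [abs_div, abs_of_pos a, div_le_iff₀ a]
    calc _ ≤ _ := this
      _ = _ := by ring
  have hm2 : ((2 : ℕ) : ℝ) ∈ Set.Icc ((2 : ℕ) : ℝ) N := ⟨le_rfl, by exact_mod_cast hN2⟩
  have hmN : (N : ℝ) ∈ Set.Icc ((2 : ℕ) : ℝ) N := ⟨by exact_mod_cast hN2, le_rfl⟩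
  have h := abs_sum_mul_sub_le logWeight B hB g (fun t => -dilog (Real.log t / l)) 2 N
    (by norm_num) hN2
    (fun s hs t ht hst => by
      rw [hgu, hgu]
      refine div_le_div_of_nonneg_right ?_ hl0.le
      have hs2 : (2 : ℝ) ≤ s := by exact_mod_cast hs.1
      exact antitone_log_one_sub_div (hu s hs).2.1
        (div_le_div_of_nonneg_right (Real.log_le_log (by linarith) hst) hl0.le)
        (by linarith [(hu t ht).2.2]))
    (fun t ht => by
      obtain ⟨a, b, c⟩ := hu t ht
      have ht2 : (2 : ℝ) ≤ t := by exact_mod_cast ht.1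
      have d1 : HasDerivAt (fun t => Real.log t / l) (t⁻¹ / l) t :=
        (Real.hasDerivAt_log (by linarith)).div_const l
      have d2 := ((hasDerivAt_dilog b (by linarith)).comp t d1).neg
      refine d2.congr_deriv ?_
      rw [hgu]
      ring)
  have hgsum : (2 * B + 1) * (|g (2 : ℕ)| + |g N|) ≤ (2 * B + 1) * (4 / l) := by
    refine mul_le_mul_of_nonneg_left ?_ (by positivity)
    have := hgb _ hm2
    have := hgb _ hmN
    have e : 4 / l = 2 / l + 2 / l := by ring
    linarith
  have hsplit : ∑ p ∈ N.primesLE, 1 / (p : ℝ) * Real.log (1 - Real.log p / l)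
      = 1 / 2 * Real.log (1 - Real.log 2 / l) + ∑ k ∈ Ioc 2 N, g k * logWeight k := by
    rw [Nat.primesLE_eq_filter_range, Finset.sum_filter]
    have e1 := sum_range_succ_sub
      (f := fun k : ℕ => if k.Prime then 1 / (k : ℝ) * Real.log (1 - Real.log k / l) else 0) hN2
    have e2 : ∑ k ∈ range (2 + 1),
        (if k.Prime then 1 / (k : ℝ) * Real.log (1 - Real.log k / l) else 0)
        = 1 / 2 * Real.log (1 - Real.log 2 / l) := by
      simp [Finset.sum_range_succ, Nat.prime_two, Nat.not_prime_zero, Nat.not_prime_one]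
    have e3 : ∑ k ∈ Ioc 2 N,
        (if k.Prime then 1 / (k : ℝ) * Real.log (1 - Real.log k / l) else 0)
        = ∑ k ∈ Ioc 2 N, g k * logWeight k := by
      refine Finset.sum_congr rfl fun k hk => ?_
      have hk := Finset.mem_Ioc.1 hk
      have := (hu k ⟨by exact_mod_cast hk.1.le, by exact_mod_cast hk.2⟩).1
      simp only [hg, logWeight]
      split_ifs
      · field_simp
      · simp
    rw [e2, e3] at e1
    linarith
  have hA := hu _ hm2
  have hAN := hu _ hmN
  have b1 := abs_log_one_sub_le hA.2.1.le hA.2.2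
  have b2 := dilog_sub_bounds le_rfl hA.2.1.le hA.2.2
  have b3 := dilog_sub_bounds hAN.2.1.le hAN.2.2 le_rfl
  have b4 : 1 / 2 - Real.log N / l ≤ 1 / l := by
    rw [div_sub_div _ _ (by norm_num) hl0.ne', div_le_div_iff₀ (by positivity) hl0]
    nlinarith
  have b5 : Real.log 2 / l ≤ 1 / l := by gcongr
  rw [dilog_zero] at b2
  push_cast at b1 b2 h hgsum
  have e5 : ((2 * B + 1) * 4 + 5) / l = (2 * B + 1) * (4 / l) + 5 * (1 / l) := by ring
  rw [hsplit, e5]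
  rw [abs_le] at h b1 ⊢
  constructor <;> linarith [h.1, h.2, b1.1, b1.2, b2.1, b2.2, b3.1, b3.2]

/-! ### The hyperbola method -/

lemma sum_primesLE_ite_le (f : ℕ → ℝ) {N n : ℕ} (h : N ≤ n) :
    ∑ p ∈ n.primesLE, (if p ≤ N then f p else 0) = ∑ p ∈ N.primesLE, f p := by
  rw [← Finset.sum_filter]
  congr 1
  ext p
  simp only [Finset.mem_filter, Nat.mem_primesLE]
  constructor
  · rintro ⟨⟨_, hp⟩, h2⟩; exact ⟨h2, hp⟩
  · rintro ⟨h2, hp⟩; exact ⟨⟨h2.trans h, hp⟩, h2⟩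

lemma le_floor_of_mul_le {x : ℝ} {p q : ℕ} (hx : 0 ≤ x) (hq : 1 ≤ q) (h : (p : ℝ) * q ≤ x) :
    p ≤ ⌊x⌋₊ := by
  rw [Nat.le_floor_iff hx]
  have hq' : (1 : ℝ) ≤ q := by exact_mod_cast hq
  nlinarith [(p.cast_nonneg : (0 : ℝ) ≤ p)]

lemma mertensS_two_eq {x : ℝ} (hx : 0 ≤ x) : mertensS 2 x =
    ∑ p ∈ (⌊x⌋₊).primesLE, ∑ q ∈ (⌊x⌋₊).primesLE,
      if (p : ℝ) * q ≤ x then 1 / ((p : ℝ) * q) else 0 := by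
  unfold mertensS
  rw [← (finTwoArrowEquiv Nat.Primes).symm.tsum_eq]
  simp only [finTwoArrowEquiv_symm_apply, Fin.prod_univ_two, Matrix.cons_val_zero,
    Matrix.cons_val_one]
  rw [Summable.tsum_prod]
  · have inner : ∀ p : Nat.Primes,
        ∑' q : Nat.Primes, (if (p : ℝ) * q ≤ x then 1 / ((p : ℝ) * q) else 0)
          = ∑ q ∈ (⌊x⌋₊).primesLE, if (p : ℝ) * q ≤ x then 1 / ((p : ℝ) * q) else 0 := by
      intro p
      rw [← tsum_primes_ite_le (fun q => if (p : ℝ) * q ≤ x then 1 / ((p : ℝ) * q) else 0)]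
      refine tsum_congr fun q => ?_
      by_cases h : (p : ℝ) * q ≤ x
      · rw [if_pos (le_floor_of_mul_le hx p.2.one_le (by linarith : (q : ℝ) * p ≤ x))]
      · rw [if_neg h, ite_self]
    rw [← tsum_primes_ite_le (fun p => ∑ q ∈ (⌊x⌋₊).primesLE,
      if (p : ℝ) * q ≤ x then 1 / ((p : ℝ) * q) else 0)]
    refine tsum_congr fun p => (inner p).trans ?_
    split_ifs with h
    · rfl
    · refine Finset.sum_eq_zero fun q hq => if_neg fun hcon => h ?_
      exact le_floor_of_mul_le hx (Nat.prime_of_mem_primesLE hq).one_le hcon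
  · refine summable_of_hasFiniteSupport
      (((finite_primes_le ⌊x⌋₊).prod (finite_primes_le ⌊x⌋₊)).subset ?_)
    rintro ⟨p, q⟩ hp
    rw [Function.mem_support] at hp
    have h : (p : ℝ) * q ≤ x := by
      by_contra hcon
      exact hp (if_neg hcon)
    exact ⟨le_floor_of_mul_le hx q.2.one_le h, le_floor_of_mul_le hx p.2.one_le (by linarith)⟩

lemma mertensS_two_of_lt_four {x : ℝ} (hx0 : 0 ≤ x) (hx : x < 4) : mertensS 2 x = 0 := by
  rw [mertensS_two_eq hx0]
  refine Finset.sum_eq_zero fun p hp => Finset.sum_eq_zero fun q hq => if_neg fun h => ?_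
  have hp2 : (2 : ℝ) ≤ p := by exact_mod_cast Nat.two_le_of_mem_primesLE hp
  have hq2 : (2 : ℝ) ≤ q := by exact_mod_cast Nat.two_le_of_mem_primesLE hq
  nlinarith

/-- Dirichlet's hyperbola method: a pair with `p q ≤ x` has `p ≤ √x` or `q ≤ √x`, and both
together imply `p q ≤ x`. -/
lemma mertensS_two_hyperbola {x : ℝ} (hx : 4 ≤ x) : mertensS 2 x =
    2 * ∑ p ∈ (⌊√x⌋₊).primesLE, 1 / (p : ℝ) * recipSum ⌊x / p⌋₊ - recipSum ⌊√x⌋₊ ^ 2 := by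
  have hx0 : 0 ≤ x := by linarith
  have hsq : √x * √x = x := Real.mul_self_sqrt hx0
  have hs1 : 1 ≤ √x := Real.one_le_sqrt.2 (by linarith)
  have hNn : ⌊√x⌋₊ ≤ ⌊x⌋₊ := Nat.floor_le_floor (by nlinarith)
  have hN : ∀ p : ℕ, p ≤ ⌊√x⌋₊ ↔ (p : ℝ) ≤ √x := fun p => Nat.le_floor_iff (by positivity)
  set N := ⌊√x⌋₊
  set n := ⌊x⌋₊ with hn
  set f : ℕ → ℕ → ℝ := fun p q => if (p : ℝ) * q ≤ x then 1 / ((p : ℝ) * q) else 0 with hf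
  have hA : ∑ p ∈ n.primesLE, ∑ q ∈ n.primesLE, (if p ≤ N then f p q else 0)
      = ∑ p ∈ N.primesLE, 1 / (p : ℝ) * recipSum ⌊x / p⌋₊ := by
    rw [← sum_primesLE_ite_le _ hNn]
    refine Finset.sum_congr rfl fun p hp => ?_
    have hp1 : 1 ≤ p := (Nat.prime_of_mem_primesLE hp).one_le
    have hp1' : (1 : ℝ) ≤ p := by exact_mod_cast hp1
    split_ifs with h
    · rw [recipSum, Finset.mul_sum,
        ← sum_primesLE_ite_le _ (Nat.floor_le_floor (div_le_self hx0 hp1') : ⌊x / p⌋₊ ≤ n)]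
      refine Finset.sum_congr rfl fun q _ => ?_
      have e : q ≤ ⌊x / p⌋₊ ↔ (p : ℝ) * q ≤ x := by
        rw [Nat.le_floor_iff (by positivity), le_div_iff₀ (by linarith), mul_comm]
      simp only [hf, e]
      split_ifs
      · field_simp
      · rfl
    · simp
  have hB : ∑ p ∈ n.primesLE, ∑ q ∈ n.primesLE, (if q ≤ N then f p q else 0)
      = ∑ p ∈ N.primesLE, 1 / (p : ℝ) * recipSum ⌊x / p⌋₊ := by
    rw [← hA, Finset.sum_comm]
    refine Finset.sum_congr rfl fun p _ => Finset.sum_congr rfl fun q _ => ?_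
    simp only [hf, mul_comm (q : ℝ) (p : ℝ)]
  have hC : ∑ p ∈ n.primesLE, ∑ q ∈ n.primesLE,
      ((if p ≤ N then 1 / (p : ℝ) else 0) * (if q ≤ N then 1 / (q : ℝ) else 0))
      = recipSum N ^ 2 := by
    rw [← Finset.sum_mul_sum, sum_primesLE_ite_le (fun p => 1 / (p : ℝ)) hNn, sq, recipSum]
  rw [mertensS_two_eq hx0, ← hC, two_mul]
  nth_rewrite 1 [← hA]
  rw [← hB, ← Finset.sum_add_distrib, ← Finset.sum_sub_distrib]
  refine Finset.sum_congr rfl fun p hp => ?_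
  rw [← Finset.sum_add_distrib, ← Finset.sum_sub_distrib]
  refine Finset.sum_congr rfl fun q hq => ?_
  have hp0 : (0 : ℝ) ≤ p := p.cast_nonneg
  have hq0 : (0 : ℝ) ≤ q := q.cast_nonneg
  simp only [hf, hN]
  by_cases h1 : (p : ℝ) ≤ √x <;> by_cases h2 : (q : ℝ) ≤ √x
  · have h : (p : ℝ) * q ≤ x := by rw [← hsq]; exact mul_le_mul h1 h2 hq0 (by positivity)
    simp only [h1, h2, h, if_true]
    field_simp
    ring
  · simp [h1, h2]
  · simp [h1, h2]
  · have h : ¬ (p : ℝ) * q ≤ x := by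
      push Not at h1 h2 ⊢
      rw [← hsq]; exact mul_lt_mul'' h1 h2 (by positivity) (by positivity)
    simp [h1, h2, h]

/-! ### Assembly -/

/-- The asymptotic formula in the range `x ≥ 4`, where the hyperbola method applies. -/
lemma mertensS_two_of_four_le : ∃ C : ℝ, ∀ x : ℝ, 4 ≤ x →
      |mertensS 2 x -
          ((Real.log (Real.log x) + mertensC1) ^ 2 - Real.pi ^ 2 / 6)| ≤
        C * Real.log (Real.log x) / Real.log x := by
  obtain ⟨M, C, hC0, hM⟩ := exists_mertens_second
  obtain ⟨K, hK0, hK⟩ := exists_abs_sum_log_one_sub_le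
  rw [← mertens_const_eq hM]
  have hl4 : 1 < Real.log 4 := by
    have : Real.log 4 = 2 * Real.log 2 := by
      rw [← Real.log_rpow (by norm_num)]; norm_num
    linarith [Real.log_two_gt_d9]
  have hc0 : 0 < Real.log (Real.log 4) := Real.log_pos hl4
  set c₀ := Real.log (Real.log 4)
  set c₁ := 4 * C + 4 * C ^ 2 + 2 * K + 4 * C * (|M| + 2 * C) with hc1
  have hc1' : 0 ≤ c₁ := by positivity
  refine ⟨c₁ / c₀ + 4 * C, fun x hx => ?_⟩
  have hx0 : 0 < x := by linarith
  have hE := hK x hx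
  have hs2 : 2 ≤ √x := Real.le_sqrt_of_sq_le (by norm_num; exact hx)
  have hP := hM √x hs2
  have hl14 : Real.log 4 ≤ Real.log x := Real.log_le_log (by norm_num) hx
  have hLc : c₀ ≤ Real.log (Real.log x) := Real.log_le_log (by linarith) hl14
  have hhalf : Real.log √x = Real.log x / 2 := Real.log_sqrt hx0.le
  have hloghalf : Real.log (Real.log √x) = Real.log (Real.log x) - Real.log 2 := by
    rw [hhalf, Real.log_div (by linarith) (by norm_num)]
  rw [mertensS_two_hyperbola hx]
  rw [hloghalf, hhalf] at hP
  set l := Real.log x with hl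
  set L := Real.log l
  have hl1 : 1 < l := by linarith
  have hl0 : 0 < l := by linarith
  set N := ⌊√x⌋₊ with hN
  set Q := ∑ p ∈ N.primesLE, 1 / (p : ℝ) * recipSum ⌊x / p⌋₊ with hQ
  set E := ∑ p ∈ N.primesLE, 1 / (p : ℝ) * Real.log (1 - Real.log p / l) with hEdef
  have hCl : C / (l / 2) = 2 * C / l := by field_simp
  rw [hCl] at hP
  -- for `p ≤ √x` one has `log (x / p) ≥ l / 2`
  have hQE : |Q - ((L + M) * recipSum N + E)| ≤ 2 * C / l * recipSum N := by
    have e : Q - ((L + M) * recipSum N + E) = ∑ p ∈ N.primesLE, 1 / (p : ℝ) *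
        (recipSum ⌊x / p⌋₊ - (L + Real.log (1 - Real.log p / l) + M)) := by
      rw [hQ, hEdef, recipSum, Finset.mul_sum, ← Finset.sum_add_distrib, ← Finset.sum_sub_distrib]
      exact Finset.sum_congr rfl fun p _ => by ring
    rw [e, recipSum, Finset.mul_sum]
    refine (Finset.abs_sum_le_sum_abs _ _).trans (Finset.sum_le_sum fun p hp => ?_)
    have hp2 : (2 : ℝ) ≤ p := by exact_mod_cast Nat.two_le_of_mem_primesLE hp
    have hps : (p : ℝ) ≤ √x :=
      (Nat.le_floor_iff (by positivity)).1 (Nat.le_of_mem_primesLE hp)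
    have hxp : √x ≤ x / p := by
      rw [le_div_iff₀ (by linarith)]
      nlinarith [Real.mul_self_sqrt hx0.le]
    have h := hM (x / p) (hs2.trans hxp)
    have hlp : Real.log p ≤ l / 2 := by
      rw [← hhalf]; exact Real.log_le_log (by linarith) hps
    have e1 : Real.log (x / p) = l * (1 - Real.log p / l) := by
      rw [Real.log_div hx0.ne' (by positivity), ← hl]
      field_simp
    have h1 : 1 / 2 ≤ 1 - Real.log p / l := by
      have : Real.log p / l ≤ 1 / 2 := by rw [div_le_iff₀ hl0]; linarith
      linarith
    rw [e1, Real.log_mul hl0.ne' (by linarith)] at h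
    rw [abs_mul, abs_of_nonneg (by positivity), mul_comm]
    refine mul_le_mul_of_nonneg_right (h.trans ?_) (by positivity)
    rw [← hCl]
    refine div_le_div_of_nonneg_left hC0 (by positivity) ?_
    nlinarith
  have hP0 := recipSum_nonneg N
  set P := recipSum N
  set r := P - (L - Real.log 2 + M) with hr
  have hCl2 : 2 * C / l ≤ 2 * C := div_le_self (by positivity) hl1.le
  have hPle : P ≤ L + |M| + 2 * C := by
    have := (abs_le.1 hP).2
    have := le_abs_self M
    have : 0 < Real.log 2 := Real.log_pos (by norm_num)
    linarith
  have hmain : 2 * Q - P ^ 2 - ((L + M) ^ 2 - π ^ 2 / 6)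
      = 2 * Real.log 2 * r - r ^ 2 + 2 * (E + dilog (1 / 2))
        + 2 * (Q - ((L + M) * P + E)) := by
    rw [← two_mul_dilog_half, hr]; ring
  have t1 : |2 * Real.log 2 * r| ≤ 4 * C / l := by
    have h20 : 0 < Real.log 2 := Real.log_pos (by norm_num)
    have h21 : Real.log 2 ≤ 1 := by linarith [Real.log_two_lt_d9]
    rw [abs_mul, abs_of_pos (by positivity)]
    have e : 4 * C / l = 2 * (2 * C / l) := by ring
    rw [e]
    nlinarith [abs_nonneg r]
  have t2 : |r ^ 2| ≤ 4 * C ^ 2 / l := by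
    rw [abs_pow]
    have e : 4 * C ^ 2 / l = 2 * C / l * (2 * C) := by ring
    rw [e, sq]
    exact mul_le_mul hP (hP.trans hCl2) (abs_nonneg _) (by positivity)
  have t3 : |2 * (E + dilog (1 / 2))| ≤ 2 * K / l := by
    rw [abs_mul, abs_two, mul_div_assoc]; linarith
  have t4 : |2 * (Q - ((L + M) * P + E))| ≤ 4 * C * (L + |M| + 2 * C) / l := by
    rw [abs_mul, abs_two]
    have e : 4 * C * (L + |M| + 2 * C) / l = 2 * (2 * C / l * (L + |M| + 2 * C)) := by ring
    rw [e]
    have : 2 * C / l * P ≤ 2 * C / l * (L + |M| + 2 * C) :=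
      mul_le_mul_of_nonneg_left hPle (by positivity)
    linarith
  rw [hmain]
  have hL : c₁ ≤ c₁ / c₀ * L := by
    rw [div_mul_eq_mul_div, le_div_iff₀ hc0]
    exact mul_le_mul_of_nonneg_left hLc hc1'
  calc _ ≤ 4 * C / l + 4 * C ^ 2 / l + 2 * K / l + 4 * C * (L + |M| + 2 * C) / l := by
        rw [abs_le] at t1 t2 t3 t4 ⊢
        constructor <;> linarith [t1.1, t1.2, t2.1, t2.2, t3.1, t3.2, t4.1, t4.2]
    _ = (c₁ + 4 * C * L) / l := by rw [hc1]; ring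
    _ ≤ _ := by
        refine div_le_div_of_nonneg_right ?_ hl0.le
        linarith

theorem mertens_S2 :
    ∃ C : ℝ, ∀ x : ℝ, 3 ≤ x →
      |mertensS 2 x -
          ((Real.log (Real.log x) + mertensC1) ^ 2 - Real.pi ^ 2 / 6)| ≤
        C * Real.log (Real.log x) / Real.log x := by
  obtain ⟨C, hC⟩ := mertensS_two_of_four_le
  have hl3 : 1 < Real.log 3 := by
    rw [Real.lt_log_iff_exp_lt (by norm_num)]
    linarith [Real.exp_one_lt_d9]
  have hl34 : Real.log 3 < Real.log 4 := Real.log_lt_log (by norm_num) (by norm_num)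
  have hd0 : 0 < Real.log (Real.log 3) := Real.log_pos hl3
  set c₀ := Real.log (Real.log 4)
  set d₀ := Real.log (Real.log 3)
  -- below `4` the sum is empty and the claim only says that the main term is bounded
  set b := (c₀ + |mertensC1|) ^ 2 + π ^ 2 / 6 with hb
  have hb0 : 0 ≤ b := by positivity
  refine ⟨max C (b / (d₀ / Real.log 4)), fun x hx => ?_⟩
  have h3x : Real.log 3 ≤ Real.log x := Real.log_le_log (by norm_num) hx
  have hLd : d₀ ≤ Real.log (Real.log x) := Real.log_le_log (by linarith) h3x
  have hl0 : 0 < Real.log x := by linarith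
  have hratio : 0 ≤ Real.log (Real.log x) / Real.log x := div_nonneg (by linarith) hl0.le
  rcases le_or_gt 4 x with h4 | h4
  · refine (hC x h4).trans ?_
    rw [mul_div_assoc, mul_div_assoc]
    exact mul_le_mul_of_nonneg_right (le_max_left _ _) hratio
  · rw [mertensS_two_of_lt_four (by linarith) h4]
    have hx4 : Real.log x ≤ Real.log 4 := Real.log_le_log (by linarith) h4.le
    have hLc : Real.log (Real.log x) ≤ c₀ := Real.log_le_log hl0 hx4
    have h1 : |0 - ((Real.log (Real.log x) + mertensC1) ^ 2 - π ^ 2 / 6)| ≤ b := by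
      have h2 : |Real.log (Real.log x) + mertensC1| ≤ c₀ + |mertensC1| := by
        refine (abs_add_le _ _).trans ?_
        rw [abs_of_nonneg (by linarith : 0 ≤ Real.log (Real.log x))]
        linarith
      have h3 : (Real.log (Real.log x) + mertensC1) ^ 2 ≤ (c₀ + |mertensC1|) ^ 2 := by
        rw [← sq_abs]
        exact pow_le_pow_left₀ (abs_nonneg _) h2 2
      have h4 := sq_nonneg (Real.log (Real.log x) + mertensC1)
      have h5 : 0 ≤ π ^ 2 / 6 := by positivity
      have h6 := sq_nonneg (c₀ + |mertensC1|)
      rw [abs_le]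
      constructor <;> linarith
    refine h1.trans ?_
    have hq0 : 0 < d₀ / Real.log 4 := div_pos hd0 (by linarith)
    have hq : d₀ / Real.log 4 ≤ Real.log (Real.log x) / Real.log x :=
      div_le_div₀ (by linarith) hLd hl0 hx4
    rw [mul_div_assoc]
    calc b = b / (d₀ / Real.log 4) * (d₀ / Real.log 4) := (div_mul_cancel₀ _ hq0.ne').symm
      _ ≤ max C (b / (d₀ / Real.log 4)) * (Real.log (Real.log x) / Real.log x) :=
        mul_le_mul (le_max_right _ _) hq hq0.le (le_trans (by positivity) (le_max_right _ _))
end
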